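/- arXiv:1810.02846 — 2 statements merged into one kernel-verified Lean document; each statement's English description precedes it below -/
import Mathlib

section
/- Suppose (A,𝔞) is a unital good pair and let 1 := 1_{M_n(A)} and Y := span_𝕜(ξ^b_{r,s} : r,s ∈ [1,n], b ∈ B_𝔠 ⊔ B_1). Then T^A_𝔞(n,d) is generated as a 𝕜-algebra by S^𝔞(n,d) := (M_n(𝔞)^{⊗d})^{S_d} together with the elements 1^{⊗(d−1)} * y = Σ_{e=0}^{d−1} 1^{⊗(d−1−e)} ⊗ y ⊗ 1^{⊗e} for y ∈ Y. Consequently, T^A_𝔞(n,d) is the subalgebra of S^A(n,d) generated by S^𝔞(n,d) and the elements Σ_{e=0}^{d−1} 1^{⊗(d−1−e)} ⊗ ξ ⊗ 1^{⊗e} with ξ ∈ M_n(A). -/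
open Finset

open scoped Classical TensorProduct

noncomputable section

namespace GS

/-- A *good pair* `(A, 𝔞)`: a `𝕜`-superalgebra `A = ev ⊕ od` which is free as a
`𝕜`-supermodule, together with a subalgebra `𝔞 = aa ⊆ A₀` such that `𝔞` and `A/𝔞` are free,
a complement `𝔠 = cc` of `𝔞` in `A₀`, and an `(A,𝔞)`-basis `B = B_𝔞 ⊔ B_𝔠 ⊔ B_1`
(encoded by `bas : Basis β 𝕜 A` with the partition `part : β → Fin 3`,
where `0` = `B_𝔞`, `1` = `B_𝔠`, `2` = `B_1`). -/
structure GoodPair (𝕜 A β : Type) [CommRing 𝕜] [NonUnitalRing A] [Module 𝕜 A] : Type where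
  ev : Submodule 𝕜 A
  od : Submodule 𝕜 A
  compl : IsCompl ev od
  mul_ee : ∀ a ∈ ev, ∀ b ∈ ev, a * b ∈ ev
  mul_eo : ∀ a ∈ ev, ∀ b ∈ od, a * b ∈ od
  mul_oe : ∀ a ∈ od, ∀ b ∈ ev, a * b ∈ od
  mul_oo : ∀ a ∈ od, ∀ b ∈ od, a * b ∈ ev
  free_ev : Module.Free 𝕜 ev
  free_od : Module.Free 𝕜 od
  aa : Submodule 𝕜 A
  aa_le_ev : aa ≤ ev
  aa_mul : ∀ a ∈ aa, ∀ b ∈ aa, a * b ∈ aa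
  free_aa : Module.Free 𝕜 aa
  free_quot : Module.Free 𝕜 (A ⧸ aa)
  cc : Submodule 𝕜 A
  aa_inf_cc : aa ⊓ cc = ⊥
  aa_sup_cc : aa ⊔ cc = ev
  bas : Module.Basis β 𝕜 A
  part : β → Fin 3
  bas_mem_aa : ∀ i, part i = 0 → bas i ∈ aa
  bas_mem_cc : ∀ i, part i = 1 → bas i ∈ cc
  bas_mem_od : ∀ i, part i = 2 → bas i ∈ od

variable {𝕜 A β : Type} [CommRing 𝕜] [NonUnitalRing A] [Module 𝕜 A]

/-- An element is homogeneous if it lies in the even or the odd part. -/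
def Homog (P : GoodPair 𝕜 A β) (a : A) : Prop := a ∈ P.ev ∨ a ∈ P.od

/-- `H`, the set of nonzero homogeneous elements of `A`. -/
def Hset (P : GoodPair 𝕜 A β) : Set A := {a | Homog P a ∧ a ≠ 0}

/-- `⟨𝐚,𝐜⟩ = #{(k,l) : k > l, a_k odd, c_l odd}` (the Koszul sign count). -/
def koz (od : Submodule 𝕜 A) {d : ℕ} (a c : Fin d → A) : ℕ :=
  (univ.filter fun kl : Fin d × Fin d => kl.2 < kl.1 ∧ a kl.1 ∈ od ∧ c kl.2 ∈ od).card

/-- `⟨σ;𝐚⟩ = #{(k,l) : k < l, σ⁻¹k > σ⁻¹l, a_k and a_l odd}`. -/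
def sgnc (od : Submodule 𝕜 A) {d : ℕ} (σ : Equiv.Perm (Fin d)) (a : Fin d → A) : ℕ :=
  (univ.filter fun kl : Fin d × Fin d =>
    kl.1 < kl.2 ∧ σ⁻¹ kl.2 < σ⁻¹ kl.1 ∧ a kl.1 ∈ od ∧ a kl.2 ∈ od).card

/-- `⟨𝐚,𝐫,𝐬⟩ = #{(k,l) : k < l, a_k, a_l odd, (a_k,r_k,s_k) > (a_l,r_l,s_l)}` with respect to
the fixed total order `ord` on `A × [1,n] × [1,n]`. -/
def ang {n : ℕ} (od : Submodule 𝕜 A) (ord : LinearOrder (A × Fin n × Fin n))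
    {d : ℕ} (a : Fin d → A) (r s : Fin d → Fin n) : ℕ :=
  (univ.filter fun kl : Fin d × Fin d =>
    kl.1 < kl.2 ∧ a kl.1 ∈ od ∧ a kl.2 ∈ od ∧
      ord.lt (a kl.2, r kl.2, s kl.2) (a kl.1, r kl.1, s kl.1)).card

/-- `(𝐚,𝐫,𝐬) ∈ Tri^H(n,d)`: all entries are nonzero homogeneous, and a repeated entry
triple forces evenness. -/
def IsTriH (P : GoodPair 𝕜 A β) {n d : ℕ} (a : Fin d → A) (r s : Fin d → Fin n) : Prop :=
  (∀ k, a k ∈ Hset P) ∧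
    ∀ k l : Fin d, k ≠ l → (a k, r k, s k) = (a l, r l, s l) → a k ∈ P.ev

/-- `(𝐛,𝐫,𝐬) ∈ Tri^B(n,d)` for words of basis elements. -/
def IsTriB (P : GoodPair 𝕜 A β) {n d : ℕ} (b : Fin d → β) (r s : Fin d → Fin n) : Prop :=
  ∀ k l : Fin d, k ≠ l → ((b k, r k, s k) : β × Fin n × Fin n) = (b l, r l, s l) →
    P.part (b k) ≠ 2

/-- Minimal length representatives of the cosets `(S_e × S_f)\S_{e+f}`. -/
def IsShuffle (e f : ℕ) (σ : Equiv.Perm (Fin (e + f))) : Prop :=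
  (∀ k l : Fin (e + f), k < l → (l : ℕ) < e → σ⁻¹ k < σ⁻¹ l) ∧
  (∀ k l : Fin (e + f), k < l → e ≤ (k : ℕ) → σ⁻¹ k < σ⁻¹ l)

/-- The tower of superalgebras `M_n(A)^{⊗d}`, `d ≥ 0`, axiomatised.  `X a r s` is the pure
tensor `ξ^{a_1}_{r_1,s_1} ⊗ ⋯ ⊗ ξ^{a_d}_{r_d,s_d}` of matrix units; it is multilinear in the
`A`-entries, the pure tensors of basis elements form a basis, multiplication is the sign-twisted
(Koszul) componentwise one, `act` is the right action of the symmetric groups by superalgebra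
automorphisms, `evT/odT` is the induced supermodule structure, `star` is the `*`-(shuffle)
product and `nab` gives the components of the deconcatenation coproduct `∇`. -/
structure Tower (𝕜 A β : Type) [CommRing 𝕜] [NonUnitalRing A] [Module 𝕜 A]
    (n : ℕ) (T : ℕ → Type) [∀ e, NonUnitalRing (T e)] [∀ e, Module 𝕜 (T e)]
    (P : GoodPair 𝕜 A β) : Type where
  X : ∀ {e : ℕ}, (Fin e → A) → (Fin e → Fin n) → (Fin e → Fin n) → T e
  X_update_add : ∀ {e : ℕ} (a : Fin e → A) (r s : Fin e → Fin n) (k : Fin e) (x y : A),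
    X (Function.update a k (x + y)) r s
      = X (Function.update a k x) r s + X (Function.update a k y) r s
  X_update_smul : ∀ {e : ℕ} (a : Fin e → A) (r s : Fin e → Fin n) (k : Fin e) (c : 𝕜) (x : A),
    X (Function.update a k (c • x)) r s = c • X (Function.update a k x) r s
  bas : ∀ e : ℕ, Module.Basis ((Fin e → β) × (Fin e → Fin n) × (Fin e → Fin n)) 𝕜 (T e)
  bas_eq : ∀ (e : ℕ) (b : Fin e → β) (r s : Fin e → Fin n),
    bas e (b, r, s) = X (fun k => P.bas (b k)) r s
  X_mul : ∀ {e : ℕ} (a c : Fin e → A) (r s t u : Fin e → Fin n),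
    (∀ k, Homog P (a k)) → (∀ k, Homog P (c k)) →
    X a r s * X c t u
      = if s = t then ((-1 : ℤ) ^ koz P.od a c) • X (fun k => a k * c k) r u else 0
  act : ∀ {e : ℕ}, Equiv.Perm (Fin e) → T e →ₗ[𝕜] T e
  act_act : ∀ {e : ℕ} (σ τ : Equiv.Perm (Fin e)) (x : T e), act τ (act σ x) = act (σ * τ) x
  act_mul : ∀ {e : ℕ} (σ : Equiv.Perm (Fin e)) (x y : T e), act σ (x * y) = act σ x * act σ y
  act_X : ∀ {e : ℕ} (σ : Equiv.Perm (Fin e)) (a : Fin e → A) (r s : Fin e → Fin n),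
    (∀ k, Homog P (a k)) →
    act σ (X a r s) = ((-1 : ℤ) ^ sgnc P.od σ a) • X (a ∘ σ) (r ∘ σ) (s ∘ σ)
  evT : ∀ e : ℕ, Submodule 𝕜 (T e)
  odT : ∀ e : ℕ, Submodule 𝕜 (T e)
  complT : ∀ e : ℕ, IsCompl (evT e) (odT e)
  X_mem_evT : ∀ {e : ℕ} (a : Fin e → A) (r s : Fin e → Fin n), (∀ k, Homog P (a k)) →
    Even (univ.filter fun k => a k ∈ P.od).card → X a r s ∈ evT e
  X_mem_odT : ∀ {e : ℕ} (a : Fin e → A) (r s : Fin e → Fin n), (∀ k, Homog P (a k)) →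
    ¬ Even (univ.filter fun k => a k ∈ P.od).card → X a r s ∈ odT e
  star : ∀ {e f : ℕ}, T e →ₗ[𝕜] T f →ₗ[𝕜] T (e + f)
  star_X : ∀ {e f : ℕ} (a : Fin e → A) (r s : Fin e → Fin n)
      (c : Fin f → A) (t u : Fin f → Fin n),
    star (X a r s) (X c t u)
      = ∑ σ ∈ univ.filter (IsShuffle e f),
          act σ (X (Fin.append a c) (Fin.append r t) (Fin.append s u))
  nab : ∀ e f : ℕ, T (e + f) →ₗ[𝕜] TensorProduct 𝕜 (T e) (T f)
  nab_X : ∀ (e f : ℕ) (a : Fin (e + f) → A) (r s : Fin (e + f) → Fin n),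
    nab e f (X a r s)
      = (X (a ∘ Fin.castAdd f) (r ∘ Fin.castAdd f) (s ∘ Fin.castAdd f))
          ⊗ₜ[𝕜] (X (a ∘ Fin.natAdd e) (r ∘ Fin.natAdd e) (s ∘ Fin.natAdd e))

variable {n : ℕ} {T : ℕ → Type} [∀ e, NonUnitalRing (T e)] [∀ e, Module 𝕜 (T e)]

/-- `ξ^𝐚_{𝐫,𝐬}`, the signed sum of the pure tensors over the `S_d`-orbit of `(𝐚,𝐫,𝐬)`. -/
def xiH {P : GoodPair 𝕜 A β} (D : Tower 𝕜 A β n T P) (ord : LinearOrder (A × Fin n × Fin n))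
    {d : ℕ} (a : Fin d → A) (r s : Fin d → Fin n) : T d :=
  ∑ w ∈ (univ.image fun σ : Equiv.Perm (Fin d) => (a ∘ σ, r ∘ σ, s ∘ σ)),
    ((-1 : ℤ) ^ (ang P.od ord a r s + ang P.od ord w.1 w.2.1 w.2.2)) • D.X w.1 w.2.1 w.2.2

/-- `ξ^𝐛_{𝐫,𝐬}` for a word `𝐛` of basis elements. -/
def xiB {P : GoodPair 𝕜 A β} (D : Tower 𝕜 A β n T P) (ord : LinearOrder (A × Fin n × Fin n))
    {d : ℕ} (b : Fin d → β) (r s : Fin d → Fin n) : T d :=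
  xiH D ord (fun k => P.bas (b k)) r s

/-- `[𝐛,𝐫,𝐬]^b_{r,s}`, the multiplicity of an entry triple in a word triple. -/
def mco {n d : ℕ} (b : Fin d → β) (r s : Fin d → Fin n) (w : β × Fin n × Fin n) : ℕ :=
  (univ.filter fun k => ((b k, r k, s k) : β × Fin n × Fin n) = w).card

/-- `∏ ([𝐛,𝐫,𝐬]^b_{r,s})!` over the entry triples whose basis element satisfies `sel`
(e.g. `sel i = (part i = 1)` gives `[𝐛,𝐫,𝐬]^!_𝔠`). -/
def facSel (sel : β → Prop) {n d : ℕ} (b : Fin d → β) (r s : Fin d → Fin n) : ℕ :=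
  ∏ w ∈ ((univ.image fun k => ((b k, r k, s k) : β × Fin n × Fin n)).filter fun w => sel w.1),
    Nat.factorial (mco b r s w)

/-- `η^𝐛_{𝐫,𝐬} := [𝐛,𝐫,𝐬]^!_𝔠 • ξ^𝐛_{𝐫,𝐬}`. -/
def eta {P : GoodPair 𝕜 A β} (D : Tower 𝕜 A β n T P) (ord : LinearOrder (A × Fin n × Fin n))
    {d : ℕ} (b : Fin d → β) (r s : Fin d → Fin n) : T d :=
  facSel (fun i => P.part i = 1) b r s • xiB D ord b r s

/-- `S^A(n,d) = (M_n(A)^{⊗d})^{S_d}`, the invariants. -/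
def SchurS {P : GoodPair 𝕜 A β} (D : Tower 𝕜 A β n T P) (d : ℕ) : Submodule 𝕜 (T d) where
  carrier := {x | ∀ σ : Equiv.Perm (Fin d), D.act σ x = x}
  add_mem' := by
    intro x y hx hy σ
    rw [map_add, hx σ, hy σ]
  zero_mem' := by
    intro σ; exact map_zero _
  smul_mem' := by
    intro c x hx σ
    rw [map_smul, hx σ]

/-- The generalized Schur algebra `T^A_𝔞(n,d)`, the `𝕜`-span of the `η^𝐛_{𝐫,𝐬}`,
`(𝐛,𝐫,𝐬) ∈ Tri^B(n,d)`. -/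
def SchurT {P : GoodPair 𝕜 A β} (D : Tower 𝕜 A β n T P) (ord : LinearOrder (A × Fin n × Fin n))
    (d : ℕ) : Submodule 𝕜 (T d) :=
  Submodule.span 𝕜 {x | ∃ b r s, IsTriB P b r s ∧ x = eta D ord b r s}

/-- `S^𝔞(n,d) = (M_n(𝔞)^{⊗d})^{S_d} ⊆ S^A(n,d)`. -/
def SchurA {P : GoodPair 𝕜 A β} (D : Tower 𝕜 A β n T P) (d : ℕ) : Submodule 𝕜 (T d) :=
  Submodule.span 𝕜 {x | ∃ a r s, (∀ k, a k ∈ P.aa) ∧ x = D.X a r s} ⊓ SchurS D d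

/-- `ξ^f = E^f ⊗ ⋯ ⊗ E^f` for `f ∈ A`. -/
def xiIdem {P : GoodPair 𝕜 A β} (D : Tower 𝕜 A β n T P) (f : A) (d : ℕ) : T d :=
  ∑ r : Fin d → Fin n, D.X (fun _ => f) r r

/-- Transport along an equality of degrees. -/
def tcast {e f : ℕ} (h : e = f) : T e ≃ₗ[𝕜] T f := by
  subst h; exact LinearEquiv.refl 𝕜 (T e)

/-- Iterated `*`-product `x_1 * x_2 * ⋯ * x_d` of degree-one pure tensors read off from a
word (associated to the left). -/
def starIter {P : GoodPair 𝕜 A β} (D : Tower 𝕜 A β n T P) :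
    ∀ (e : ℕ), (Fin e → A) → (Fin e → Fin n) → (Fin e → Fin n) → T e
  | 0, _, _, _ => D.X Fin.elim0 Fin.elim0 Fin.elim0
  | (e + 1), a, r, s =>
      D.star (starIter D e (a ∘ Fin.castSucc) (r ∘ Fin.castSucc) (s ∘ Fin.castSucc))
        (D.X (fun _ : Fin 1 => a (Fin.last e)) (fun _ => r (Fin.last e)) (fun _ => s (Fin.last e)))

/-- Iterated `*`-product of blockwise given elements. -/
def starBlocks {P : GoodPair 𝕜 A β} (D : Tower 𝕜 A β n T P) :
    ∀ (q : ℕ) (sz : Fin q → ℕ), (∀ m, T (sz m)) → T (∑ m, sz m)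
  | 0, sz, _ => cast (congrArg T (Fin.sum_univ_zero sz).symm) (D.X Fin.elim0 Fin.elim0 Fin.elim0)
  | (q + 1), sz, x =>
      cast (congrArg T (Fin.sum_univ_castSucc sz).symm)
        (D.star (starBlocks D q (fun m => sz m.castSucc) (fun m => x m.castSucc))
          (x (Fin.last q)))

/-- Concatenation of a tuple of words of lengths `sz 0, …, sz (q-1)`. -/
def concatB {α : Type} : ∀ {q : ℕ} (sz : Fin q → ℕ), (∀ m, Fin (sz m) → α) → Fin (∑ m, sz m) → α
  | 0, sz, _ => fun k => Fin.elim0 (cast (congrArg Fin (Fin.sum_univ_zero sz)) k)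
  | (q + 1), sz, f => fun k =>
      Fin.append (concatB (fun m => sz m.castSucc) (fun m => f m.castSucc)) (f (Fin.last q))
        (cast (congrArg Fin (Fin.sum_univ_castSucc sz)) k)

/-- A triple of words `(𝐛,𝐫,𝐬)`. -/
abbrev WordTriple (β : Type) (n d : ℕ) : Type :=
  (Fin d → β) × (Fin d → Fin n) × (Fin d → Fin n)

/-- The diagonal right place-permutation action on triples of words. -/
def wAct {d : ℕ} (w : WordTriple β n d) (σ : Equiv.Perm (Fin d)) : WordTriple β n d :=
  (w.1 ∘ σ, w.2.1 ∘ σ, w.2.2 ∘ σ)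

/-- The `k`-th entry triple `(b_k, r_k, s_k)` (with `b_k` realized in `A`). -/
def entryAt (P : GoodPair 𝕜 A β) {n d : ℕ} (w : WordTriple β n d) (k : Fin d) :
    A × Fin n × Fin n :=
  (P.bas (w.1 k), w.2.1 k, w.2.2 k)

/-- The lexicographic order on triples of words induced by the total order `ord`. -/
def wordLE (P : GoodPair 𝕜 A β) {n : ℕ} (ord : LinearOrder (A × Fin n × Fin n)) {d : ℕ}
    (w w' : WordTriple β n d) : Prop :=
  (∀ k, entryAt P w k = entryAt P w' k) ∨
    ∃ l : Fin d, (∀ k, k < l → entryAt P w k = entryAt P w' k) ∧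
      ord.lt (entryAt P w l) (entryAt P w' l)

/-- `Tri^B_0(n,d)`: the lexicographically minimal representatives of the `S_d`-orbits on
`Tri^B(n,d)`. -/
def IsTri0 (P : GoodPair 𝕜 A β) {n : ℕ} (ord : LinearOrder (A × Fin n × Fin n)) {d : ℕ}
    (w : WordTriple β n d) : Prop :=
  IsTriB P w.1 w.2.1 w.2.2 ∧ ∀ σ : Equiv.Perm (Fin d), wordLE P ord w (wAct w σ)

/-- The first `l` letters of each word. -/
def firstW {d : ℕ} (l : ℕ) (hl : l ≤ d) (w : WordTriple β n d) : WordTriple β n l :=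
  (fun k => w.1 ⟨k, lt_of_lt_of_le k.isLt hl⟩,
   fun k => w.2.1 ⟨k, lt_of_lt_of_le k.isLt hl⟩,
   fun k => w.2.2 ⟨k, lt_of_lt_of_le k.isLt hl⟩)

/-- The last `d - l` letters of each word. -/
def lastW {d : ℕ} (l : ℕ) (hl : l ≤ d) (w : WordTriple β n d) : WordTriple β n (d - l) :=
  (fun k => w.1 ⟨l + (k : ℕ), by have := k.isLt; omega⟩,
   fun k => w.2.1 ⟨l + (k : ℕ), by have := k.isLt; omega⟩,
   fun k => w.2.2 ⟨l + (k : ℕ), by have := k.isLt; omega⟩)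

/-- Concatenation of words. -/
def appF {α : Type} {d : ℕ} (l : ℕ) (hl : l ≤ d) (f : Fin l → α) (g : Fin (d - l) → α) :
    Fin d → α :=
  fun k => if hk : (k : ℕ) < l then f ⟨k, hk⟩ else g ⟨(k : ℕ) - l, by have := k.isLt; omega⟩

/-- Concatenation `T¹T²` of two triples of words. -/
def concatW {d : ℕ} (l : ℕ) (hl : l ≤ d) (p : WordTriple β n l × WordTriple β n (d - l)) :
    WordTriple β n d :=
  (appF l hl p.1.1 p.2.1, appF l hl p.1.2.1 p.2.2.1, appF l hl p.1.2.2 p.2.2.2)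

/-- `Spl_l(T)`, the set of `l`-splits of `T ∈ Tri^B_0(n,d)`. -/
def splitsF (P : GoodPair 𝕜 A β) {n : ℕ} (ord : LinearOrder (A × Fin n × Fin n)) {d : ℕ}
    (l : ℕ) (hl : l ≤ d) (w : WordTriple β n d) :
    Finset (WordTriple β n l × WordTriple β n (d - l)) :=
  (univ.image fun σ : Equiv.Perm (Fin d) =>
      (firstW l hl (wAct w σ), lastW l hl (wAct w σ))).filter
    fun p => IsTri0 P ord p.1 ∧ IsTri0 P ord p.2

/-- The number of inversions (= Coxeter length) of a permutation. -/
def invCount {d : ℕ} (σ : Equiv.Perm (Fin d)) : ℕ :=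
  (univ.filter fun kl : Fin d × Fin d => kl.1 < kl.2 ∧ σ kl.2 < σ kl.1).card

/-- The submodule `{x | x·ε = x}` (for an idempotent `ε` this is `R·ε`). -/
def rfix (𝕜 : Type) {R : Type} [CommRing 𝕜] [NonUnitalRing R] [Module 𝕜 R]
    [IsScalarTower 𝕜 R R] (ε : R) : Submodule 𝕜 R where
  carrier := {x | x * ε = x}
  add_mem' := by
    intro x y hx hy
    simp only [Set.mem_setOf_eq] at *
    rw [add_mul, hx, hy]
  zero_mem' := by simp
  smul_mem' := by
    intro c x hx
    simp only [Set.mem_setOf_eq] at *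
    rw [smul_mul_assoc, hx]

/-- Right `εSε`-module endomorphism property for a map of `S·ε = M ⊓ rfix ε`,
where `S` is the (possibly non-unital) algebra realized as the submodule `M` of `R`. -/
def IsEquivar (𝕜 : Type) {R : Type} [CommRing 𝕜] [NonUnitalRing R] [Module 𝕜 R]
    [IsScalarTower 𝕜 R R] (M : Submodule 𝕜 R) (ε : R)
    (f : ↥(M ⊓ rfix 𝕜 ε) →ₗ[𝕜] ↥(M ⊓ rfix 𝕜 ε)) : Prop :=
  ∀ (x : ↥(M ⊓ rfix 𝕜 ε)) (c : R), c ∈ M → ε * c * ε = c →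
    ∀ h : (x : R) * c ∈ M ⊓ rfix 𝕜 ε,
      ((f ⟨(x : R) * c, h⟩ : ↥(M ⊓ rfix 𝕜 ε)) : R) = (f x : R) * c

/-- `ε` is a *double centralizer idempotent* for the algebra `M ⊆ R`: the left
multiplication map `λ : M → End_{εMε}(Mε)` is bijective. -/
def IsDCI (𝕜 : Type) {R : Type} [CommRing 𝕜] [NonUnitalRing R] [Module 𝕜 R]
    [IsScalarTower 𝕜 R R] (M : Submodule 𝕜 R) (ε : R) : Prop :=
  (∀ s ∈ M, ∀ s' ∈ M, (∀ x ∈ M ⊓ rfix 𝕜 ε, s * x = s' * x) → s = s') ∧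
  (∀ f : ↥(M ⊓ rfix 𝕜 ε) →ₗ[𝕜] ↥(M ⊓ rfix 𝕜 ε), IsEquivar 𝕜 M ε f →
    ∃ s ∈ M, ∀ x : ↥(M ⊓ rfix 𝕜 ε), (f x : R) = s * (x : R))

/-- `1^{⊗(d−1−e)} ⊗ ξ ⊗ 1^{⊗e}` with the matrix `ξ = m ∈ M_n(A)` inserted in slot `j`,
expanded in pure tensors of matrix units (`one` is the unit of `A`). -/
def insSlot {𝕜 A β : Type} [CommRing 𝕜] [NonUnitalRing A] [Module 𝕜 A]
    {n : ℕ} {T : ℕ → Type} [∀ e, NonUnitalRing (T e)] [∀ e, Module 𝕜 (T e)]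
    {P : GoodPair 𝕜 A β} (D : Tower 𝕜 A β n T P) (one : A) {d : ℕ} (j : Fin d)
    (m : Matrix (Fin n) (Fin n) A) : T d :=
  ∑ p ∈ (univ.filter fun p : (Fin d → Fin n) × (Fin d → Fin n) =>
      ∀ k, k ≠ j → p.1 k = p.2 k),
    D.X (fun k => if k = j then m (p.1 j) (p.2 j) else one) p.1 p.2

/-- The span of the matrix units `ξ^b_{r,s}` with `b ∈ B_𝔠 ⊔ B_1`, i.e. `Y ⊆ M_n(A)`. -/
def Ymat {𝕜 A β : Type} [CommRing 𝕜] [NonUnitalRing A] [Module 𝕜 A] {n : ℕ}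
    (P : GoodPair 𝕜 A β) : Submodule 𝕜 (Matrix (Fin n) (Fin n) A) :=
  Submodule.span 𝕜 {m | ∃ (i : β) (r s : Fin n), P.part i ≠ 0 ∧
    m = Matrix.single r s (P.bas i)}

/-!
Let `N = ∑ σ` be the symmetrisation of `M_n(A)^{⊗d}` over `S_d`. For a word `w` of matrix units
`ξ^b_{r,s}`, `b ∈ B`, with tensor product `X_w`, one has `N X_w = |Stab w| • η_w`, where `Stab w`
is the group of the permutations which preserve `w` and fix every position whose letter lies
outside `B_𝔞`. As `𝕜` is torsion-free, `z` lies in a submodule `Q` as soon as `|Stab w| • z` lies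
in `|Stab w| • Q`, so memberships become divisibility statements about stabilisers.

`T^A_𝔞(n,d)` is closed under right multiplication by an invariant `t` whenever every word `u`
occurring in `X_w t` has at most one letter outside `B_𝔞` at a position where the letter of `w` is
in `B_𝔞`: a permutation in `Stab w` which preserves `u` then lies in `Stab u`, so the `Stab w`-orbit
sums in `N (X_w t) = (N X_w) t` are divisible by `|Stab w|`. This applies to the generators `t`.

Conversely, let `Q` contain `S^𝔞(n,d)` and be stable under right multiplication by the slot sums
`∑ 1 ⊗ ⋯ ⊗ m ⊗ ⋯ ⊗ 1`. For a word `w` of matrices with entries in `𝔞` outside a set `M` of marked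
positions, `N X_w` is `|Stab_M w|` times an element of `Q`, by induction on the number of positions
which are marked or carry a matrix other than `1`: replace a marked matrix `m` by `1` and multiply
by the slot sum of `m`. The summands in the `Stab`-orbit of the chosen position all equal `± N X_w`,
and the other ones are covered by the induction hypothesis.
-/

section Multiples

variable {V : Type} [AddCommGroup V] [Module 𝕜 V]

/-- The submodule `m Q` of the `m`-fold multiples of the elements of `Q`. -/
def natMultiples (m : ℕ) (Q : Submodule 𝕜 V) : Submodule 𝕜 V :=
  Q.map (m • LinearMap.id)

variable {m m' : ℕ} {Q : Submodule 𝕜 V}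

theorem mem_natMultiples {x : V} : x ∈ natMultiples m Q ↔ ∃ y ∈ Q, m • y = x := by
  simp [natMultiples]

theorem nsmul_mem_natMultiples {x : V} (hx : x ∈ Q) : m • x ∈ natMultiples m Q :=
  mem_natMultiples.2 ⟨x, hx, rfl⟩

theorem natMultiples_le_of_dvd (h : m' ∣ m) : natMultiples m Q ≤ natMultiples m' Q := by
  intro x hx
  obtain ⟨y, hy, rfl⟩ := mem_natMultiples.1 hx
  obtain ⟨k, rfl⟩ := h
  exact mem_natMultiples.2 ⟨k • y, Q.smul_of_tower_mem k hy, (mul_smul _ _ _).symm⟩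

theorem nsmul_mem_natMultiples_mul_iff [IsAddTorsionFree V] {k : ℕ} (hk : k ≠ 0) {x : V} :
    k • x ∈ natMultiples (k * m) Q ↔ x ∈ natMultiples m Q := by
  simp only [mem_natMultiples, mul_smul, (nsmul_right_injective hk).eq_iff]

theorem nsmul_mem_natMultiples_iff [IsAddTorsionFree V] (hm : m ≠ 0) {x : V} :
    m • x ∈ natMultiples m Q ↔ x ∈ Q := by
  simp only [mem_natMultiples, (nsmul_right_injective hm).eq_iff, exists_eq_right]

end Multiples

section OrbitSums

variable {G ι V : Type} [Group G] [MulAction G ι] [AddCommGroup V] [Module 𝕜 V]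
  {φ : ι → V} {Q : Submodule 𝕜 V} {s : Finset ι}

theorem filter_mem_orbit_eq_of_smul_mem (hs : ∀ g : G, ∀ i ∈ s, g • i ∈ s) {i : ι} (hi : i ∈ s) :
    (↑{j ∈ s | j ∈ MulAction.orbit G i} : Set ι) = MulAction.orbit G i := by
  ext j
  simp only [coe_filter, Set.mem_ofPred_eq, and_iff_right_iff_imp]
  rintro ⟨g, rfl⟩
  exact hs g i hi

theorem sum_filter_mem_orbit (hs : ∀ g : G, ∀ i ∈ s, g • i ∈ s)
    (hφ : ∀ (g : G) i, φ (g • i) = φ i) {i : ι} (hi : i ∈ s) :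
    ∑ j ∈ s with j ∈ MulAction.orbit G i, φ j = Nat.card (MulAction.orbit G i) • φ i := by
  rw [sum_congr rfl (g := fun _ => φ i), sum_const, ← Set.ncard_coe_finset,
    filter_mem_orbit_eq_of_smul_mem hs hi, Nat.card_coe_set_eq]
  intro j hj
  obtain ⟨g, rfl⟩ := (mem_filter.1 hj).2
  exact hφ g i

theorem sum_mem_natMultiples_card (hs : ∀ g : G, ∀ i ∈ s, g • i ∈ s)
    (hφ : ∀ (g : G) i, φ (g • i) = φ i)
    (hmem : ∀ i ∈ s, φ i ∈ natMultiples (Nat.card (MulAction.stabilizer G i)) Q) :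
    ∑ i ∈ s, φ i ∈ natMultiples (Nat.card G) Q := by
  rw [sum_partition (MulAction.orbitRel G ι)]
  refine sum_mem fun c hc => ?_
  obtain ⟨i, hi, rfl⟩ := mem_image.1 hc
  have horbit : ∀ j, Quotient.mk (MulAction.orbitRel G ι) j = Quotient.mk _ i ↔
      j ∈ MulAction.orbit G i := fun j => by rw [Quotient.eq, MulAction.orbitRel_apply]
  simp only [horbit]
  obtain ⟨y, hy, hyi⟩ := mem_natMultiples.1 (hmem i hi)
  rw [sum_filter_mem_orbit hs hφ hi, ← hyi, ← mul_smul,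
    ← Nat.card_congr (MulAction.orbitProdStabilizerEquivGroup G i), Nat.card_prod]
  exact nsmul_mem_natMultiples hy

theorem mem_natMultiples_card_stabilizer_of_sum_mem [Finite G] [IsAddTorsionFree V]
    (hs : ∀ g : G, ∀ i ∈ s, g • i ∈ s) (hφ : ∀ (g : G) i, φ (g • i) = φ i)
    (hsum : ∑ i ∈ s, φ i ∈ natMultiples (Nat.card G) Q) {i : ι} (hi : i ∈ s)
    (hmem : ∀ j ∈ s, j ∉ MulAction.orbit G i →
      φ j ∈ natMultiples (Nat.card (MulAction.stabilizer G j)) Q) :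
    φ i ∈ natMultiples (Nat.card (MulAction.stabilizer G i)) Q := by
  have hoff : ∑ j ∈ s with j ∉ MulAction.orbit G i, φ j ∈ natMultiples (Nat.card G) Q := by
    refine sum_mem_natMultiples_card (fun g j hj => ?_) hφ fun j hj =>
      hmem j (mem_filter.1 hj).1 (mem_filter.1 hj).2
    rw [mem_filter, ← MulAction.orbit_eq_iff] at *
    rw [MulAction.orbit_smul]
    exact ⟨hs g j hj.1, hj.2⟩
  rw [← sum_filter_add_sum_filter_not s (· ∈ MulAction.orbit G i),
    Submodule.add_mem_iff_left _ hoff, sum_filter_mem_orbit hs hφ hi,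
    ← Nat.card_congr (MulAction.orbitProdStabilizerEquivGroup G i), Nat.card_prod] at hsum
  have : Nonempty (MulAction.orbit G i) := ⟨⟨i, MulAction.mem_orbit_self i⟩⟩
  have : Finite (MulAction.orbit G i) := Set.finite_range _
  exact (nsmul_mem_natMultiples_mul_iff Nat.card_pos.ne').1 hsum

end OrbitSums

section MarkedStabilizers

variable {ι γ : Type}

/-- The group of the permutations which fix the positions in `M` and preserve the word `f`. -/
def markedStabilizer (M : Set ι) (f : ι → γ) : Subgroup (Equiv.Perm ι) where
  carrier := {σ | (∀ k ∈ M, σ k = k) ∧ f ∘ σ = f}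
  mul_mem' := by
    rintro σ τ ⟨hσM, hσf⟩ ⟨hτM, hτf⟩
    refine ⟨fun k hk => ?_, ?_⟩
    · rw [Equiv.Perm.mul_apply, hτM k hk, hσM k hk]
    · rw [Equiv.Perm.coe_mul, ← Function.comp_assoc, hσf, hτf]
  one_mem' := by simp
  inv_mem' := by
    rintro σ ⟨hσM, hσf⟩
    refine ⟨fun k hk => by rw [Equiv.Perm.inv_eq_iff_eq, hσM k hk], ?_⟩
    nth_rewrite 1 [← hσf]
    funext k
    simp

theorem mem_markedStabilizer {M : Set ι} {f : ι → γ} {σ : Equiv.Perm ι} :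
    σ ∈ markedStabilizer M f ↔ (∀ k ∈ M, σ k = k) ∧ f ∘ σ = f := Iff.rfl

/-- The word `f` with every letter violating `sel` replaced by a letter peculiar to its position. -/
def separateLetters (sel : γ → Prop) (f : ι → γ) (k : ι) : γ ⊕ ι :=
  if sel (f k) then Sum.inl (f k) else Sum.inr k

theorem separateLetters_eq_inl {sel : γ → Prop} {f : ι → γ} {k : ι} {v : γ} :
    separateLetters sel f k = Sum.inl v ↔ sel v ∧ f k = v := by
  unfold separateLetters
  grind

theorem separateLetters_eq_inr {sel : γ → Prop} {f : ι → γ} {k l : ι} :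
    separateLetters sel f k = Sum.inr l ↔ ¬ sel (f k) ∧ k = l := by
  unfold separateLetters
  grind

theorem mem_markedStabilizer_iff_separateLetters {sel : γ → Prop} {f : ι → γ}
    {σ : Equiv.Perm ι} : σ ∈ markedStabilizer {k | ¬ sel (f k)} f ↔
      separateLetters sel f ∘ σ = separateLetters sel f := by
  simp only [mem_markedStabilizer, funext_iff, Function.comp_apply, Set.mem_ofPred_eq,
    separateLetters]
  grind

theorem card_markedStabilizer [Fintype ι] [DecidableEq γ] (sel : γ → Prop) [DecidablePred sel]
    (f : ι → γ) :
    Nat.card (markedStabilizer {k | ¬ sel (f k)} f) =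
      ∏ v ∈ univ.image f with sel v, (#{k | f k = v}).factorial := by
  have hcard : Nat.card (markedStabilizer {k | ¬ sel (f k)} f) =
      ∏ v ∈ univ.image (separateLetters sel f), (#{k | separateLetters sel f k = v}).factorial := by
    rw [Nat.card_congr (Equiv.subtypeEquivRight fun _ => mem_markedStabilizer_iff_separateLetters),
      Nat.card_eq_fintype_card, DomMulAct.stabilizer_card']
    simp only [Fintype.card_subtype]
  rw [hcard, eq_comm]
  refine prod_bij_ne_one (fun v _ _ => Sum.inl v) ?_ ?_ ?_ ?_
  · intro v hv _
    obtain ⟨hv, hsel⟩ := mem_filter.1 hv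
    obtain ⟨k, -, rfl⟩ := mem_image.1 hv
    exact mem_image.2 ⟨k, mem_univ k, separateLetters_eq_inl.2 ⟨hsel, rfl⟩⟩
  · exact fun _ _ _ _ _ _ h => Sum.inl_injective h
  · rintro (v | l) hv hne
    · obtain ⟨k, -, hk⟩ := mem_image.1 hv
      obtain ⟨hsel, rfl⟩ := separateLetters_eq_inl.1 hk
      refine ⟨f k, by simp [hsel], ?_, rfl⟩
      simpa [separateLetters_eq_inl, hsel] using hne
    · refine absurd (Nat.factorial_eq_one.2 (card_le_one.2 fun k hk k' hk' => ?_)) hne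
      simp only [mem_filter, mem_univ, true_and, separateLetters_eq_inr] at hk hk'
      rw [hk.2, hk'.2]
  · intro v hv _
    simp [separateLetters_eq_inl, (mem_filter.1 hv).2]

theorem sum_comp_eq_card_nsmul {G X M : Type} [Group G] [Fintype G] [DecidableEq X]
    [AddCommMonoid M] (K : Subgroup G) (g : G → X)
    (hg : ∀ σ τ, g σ = g τ ↔ σ * τ⁻¹ ∈ K) (F : X → M) :
    ∑ σ, F (g σ) = Nat.card K • ∑ x ∈ univ.image g, F x := by
  rw [sum_comp F g, smul_sum]
  refine sum_congr rfl fun x hx => ?_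
  obtain ⟨τ, -, rfl⟩ := mem_image.1 hx
  congr 1
  rw [← Fintype.card_subtype, ← Nat.card_eq_fintype_card]
  exact Nat.card_congr ((Equiv.mulRight τ⁻¹).subtypeEquiv fun σ => hg σ τ)

theorem comp_eq_comp_iff_mem_markedStabilizer (f : ι → γ) (σ τ : Equiv.Perm ι) :
    f ∘ σ = f ∘ τ ↔ σ * τ⁻¹ ∈ markedStabilizer ∅ f := by
  simp only [mem_markedStabilizer, Set.mem_empty_iff_false, false_implies, implies_true, true_and,
    funext_iff, Function.comp_apply, Equiv.Perm.mul_apply]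
  exact ⟨fun h k => by simpa using h (τ⁻¹ k), fun h k => by simpa using h (τ k)⟩

end MarkedStabilizers

section Signs

/-- The number of pairs which the relations `R` and `R'` put into opposite orders. -/
def disagreementCount {ι : Type} [Fintype ι] (R R' : ι → ι → Prop) : ℕ :=
  #{kl : ι × ι | R kl.1 kl.2 ∧ R' kl.2 kl.1}

/-- Where two orders disagree, a third one disagrees with exactly one of them. -/
theorem disagreementCount_eq_add {ι : Type} [Fintype ι] {R R' R'' : ι → ι → Prop}
    (h : ∀ k l, R k l → (R'' k l ↔ ¬ R'' l k)) :
    disagreementCount R R' = disagreementCount R (R' ⊓ R'') + disagreementCount R' (R ⊓ R'') := by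
  have hswap : disagreementCount R' (R ⊓ R'') =
      #{kl : ι × ι | R kl.1 kl.2 ∧ R' kl.2 kl.1 ∧ ¬ R'' kl.2 kl.1} := by
    refine card_equiv (Equiv.prodComm ι ι) fun ⟨k, l⟩ => ?_
    simp only [mem_filter, mem_univ, true_and, Pi.inf_apply, inf_Prop_eq, Equiv.prodComm_apply,
      Prod.swap_prod_mk]
    grind
  rw [hswap, disagreementCount, disagreementCount,
    ← card_filter_add_card_filter_not (fun kl : ι × ι => R'' kl.2 kl.1), filter_filter,
    filter_filter]
  simp only [Pi.inf_apply, inf_Prop_eq, and_assoc]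

theorem even_disagreementCount_add {ι : Type} [Fintype ι] {R R' R'' : ι → ι → Prop}
    (hR : ∀ k l, R' k l → (R k l ↔ ¬ R l k)) (hR' : ∀ k l, R k l → (R' k l ↔ ¬ R' l k))
    (hR'' : ∀ k l, R k l → (R'' k l ↔ ¬ R'' l k)) :
    Even (disagreementCount R R' + (disagreementCount R R'' + disagreementCount R' R'')) := by
  rw [disagreementCount_eq_add (R' := R') hR'', disagreementCount_eq_add (R' := R'') hR',
    disagreementCount_eq_add (R' := R'') hR, inf_comm R'' R', inf_comm R'' R, inf_comm R' R]
  exact ⟨disagreementCount R (R' ⊓ R'') + disagreementCount R' (R ⊓ R'') +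
    disagreementCount R'' (R ⊓ R'), by ring⟩

variable {d : ℕ}

/-- The number `⟨σ;𝐚⟩` for a word `𝐚` whose parities are given by `p`. -/
def inversionCount (σ : Equiv.Perm (Fin d)) (p : Fin d → ZMod 2) : ℕ :=
  #{kl : Fin d × Fin d | kl.1 < kl.2 ∧ σ⁻¹ kl.2 < σ⁻¹ kl.1 ∧ p kl.1 = 1 ∧ p kl.2 = 1}

/-- The number `⟨𝐚,𝐜⟩` for words `𝐚` and `𝐜` whose parities are given by `p` and `q`. -/
def koszulCount (p q : Fin d → ZMod 2) : ℕ :=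
  #{kl : Fin d × Fin d | kl.2 < kl.1 ∧ p kl.1 = 1 ∧ q kl.2 = 1}

/-- The number `⟨𝐚,𝐫,𝐬⟩` for a word `f` of letters `(a_k, r_k, s_k)` with parities `p`. -/
def letterInversionCount {γ : Type} (ord : LinearOrder γ) (p : Fin d → ZMod 2) (f : Fin d → γ) :
    ℕ :=
  #{kl : Fin d × Fin d | kl.1 < kl.2 ∧ p kl.1 = 1 ∧ p kl.2 = 1 ∧ ord.lt (f kl.2) (f kl.1)}

theorem inversionCount_eq_zero {σ : Equiv.Perm (Fin d)} {p : Fin d → ZMod 2}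
    (h : ∀ k, p k = 1 → σ k = k) : inversionCount σ p = 0 := by
  refine card_eq_zero.2 (filter_eq_empty_iff.2 ?_)
  rintro ⟨k, l⟩ - ⟨hkl, hσ, hk, hl⟩
  rw [Equiv.Perm.inv_eq_iff_eq.2 (h k hk).symm, Equiv.Perm.inv_eq_iff_eq.2 (h l hl).symm] at hσ
  exact lt_asymm hkl hσ

theorem inversionCount_single (σ : Equiv.Perm (Fin d)) (j : Fin d) (ε : ZMod 2) :
    inversionCount σ (Pi.single j ε) = 0 := by
  have hodd : ∀ k, (Pi.single j ε : Fin d → ZMod 2) k = 1 → k = j := by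
    intro k hk
    by_contra hkj
    simp [hkj] at hk
  refine card_eq_zero.2 (filter_eq_empty_iff.2 ?_)
  rintro ⟨k, l⟩ - ⟨hkl, -, hk, hl⟩
  exact hkl.ne ((hodd k hk).trans (hodd l hl).symm)

/-- `(x, y) ↦ (σ y, σ x)` permutes the inversions of `σ = (k l)` and fixes only `(k, l)`. -/
theorem odd_inversionCount_swap {p : Fin d → ZMod 2} {k l : Fin d} (hkl : k < l) (hk : p k = 1)
    (hl : p l = 1) : Odd (inversionCount (Equiv.swap k l) p) := by
  set σ := Equiv.swap k l with hσ
  set I : Finset (Fin d × Fin d) :=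
    {xy | xy.1 < xy.2 ∧ σ⁻¹ xy.2 < σ⁻¹ xy.1 ∧ p xy.1 = 1 ∧ p xy.2 = 1} with hI
  have hp : ∀ x, p (σ x) = p x := by
    intro x
    rw [hσ, Equiv.swap_apply_def]
    grind
  have hmem : ∀ x y, (x, y) ∈ I ↔ x < y ∧ σ y < σ x ∧ p x = 1 ∧ p y = 1 := by
    simp [hI, hσ, Equiv.swap_inv]
  have hklI : (k, l) ∈ I := by simp [hmem, hσ, hkl, hk, hl]
  have hsum : ∑ _xy ∈ I.erase (k, l), (1 : ZMod 2) = 0 := by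
    refine sum_involution (fun xy _ => (σ xy.2, σ xy.1)) (fun _ _ => by decide) ?_ ?_ ?_
    · rintro ⟨x, y⟩ hxy - hfix
      rw [mem_erase, hmem] at hxy
      simp only [Prod.mk.injEq, hσ, Equiv.swap_apply_def] at hxy hfix
      grind
    · rintro ⟨x, y⟩ hxy
      rw [mem_erase, hmem] at hxy ⊢
      refine ⟨fun h => hxy.1 ?_, ?_⟩
      · simp only [Prod.mk.injEq] at h
        rw [Prod.mk.injEq, ← σ.injective.eq_iff, ← σ.injective.eq_iff (a := y), h.1, h.2]
        simp [hσ]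
      · have hσσ : ∀ z, σ (σ z) = z := by simp [hσ]
        exact ⟨hxy.2.2.1, by rw [hσσ, hσσ]; exact hxy.2.1, (hp y).trans hxy.2.2.2.2,
          (hp x).trans hxy.2.2.2.1⟩
    · rintro ⟨x, y⟩ -
      simp [hσ]
  rw [sum_const, nsmul_one, ZMod.natCast_eq_zero_iff_even] at hsum
  change Odd #I
  rw [← card_erase_add_one hklI]
  exact hsum.add_one

theorem even_inversionCount_add {γ : Type} (ord : LinearOrder γ) (σ : Equiv.Perm (Fin d))
    {p : Fin d → ZMod 2} {f : Fin d → γ} (hf : ∀ k l, k ≠ l → p k = 1 → f k ≠ f l) :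
    Even (inversionCount σ p +
      (letterInversionCount ord p f + letterInversionCount ord (p ∘ σ) (f ∘ σ))) := by
  let position : Fin d → Fin d → Prop := fun k l => k < l ∧ p k = 1 ∧ p l = 1
  let newPosition : Fin d → Fin d → Prop := fun k l => σ⁻¹ k < σ⁻¹ l ∧ p k = 1 ∧ p l = 1
  let letter : Fin d → Fin d → Prop := fun k l => ord.lt (f k) (f l) ∧ p k = 1 ∧ p l = 1
  have hpos : inversionCount σ p = disagreementCount position newPosition := by
    simp only [inversionCount, disagreementCount, position, newPosition]
    congr! 2
    tauto
  have hletter : letterInversionCount ord p f = disagreementCount position letter := by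
    simp only [letterInversionCount, disagreementCount, position, letter]
    congr! 2
    tauto
  have hletter' : letterInversionCount ord (p ∘ σ) (f ∘ σ) =
      disagreementCount newPosition letter := by
    refine card_equiv (σ.prodCongr σ) ?_
    simp only [Function.comp_apply, mem_filter, mem_univ, true_and, Equiv.Perm.coe_inv,
      Equiv.prodCongr_apply, Prod.map_fst, Equiv.symm_apply_apply, Prod.map_snd, Prod.forall,
      newPosition, letter]
    tauto
  rw [hpos, hletter, hletter']
  refine even_disagreementCount_add ?_ ?_ ?_
  · rintro k l ⟨hlt, hk, hl⟩
    have hne : k ≠ l := fun h => hlt.ne (congrArg _ h)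
    simp only [position, hk, hl, and_true]
    grind
  · rintro k l ⟨hlt, hk, hl⟩
    have hne : σ⁻¹ k ≠ σ⁻¹ l := fun h => hlt.ne (σ⁻¹.injective h)
    simp only [newPosition, hk, hl, and_true]
    grind
  · rintro k l ⟨hlt, hk, hl⟩
    have hne := hf k l hlt.ne hk
    simp only [letter, hk, hl, and_true]
    exact ⟨fun h => (@lt_asymm _ ord.toPreorder _ _ h), fun h =>
      ((@lt_or_gt_of_ne _ ord _ _ hne).resolve_right h)⟩

end Signs

section Degrees

namespace GoodPair

variable (P : GoodPair 𝕜 A β)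

/-- The homogeneous component of `A` of degree `ε ∈ ℤ/2`. -/
def degreePart (ε : ZMod 2) : Submodule 𝕜 A := if ε = 0 then P.ev else P.od

/-- The degree of the basis element `P.bas i`. -/
def degree (i : β) : ZMod 2 := if P.part i = 2 then 1 else 0

variable {P}

theorem mul_mem_degreePart {ε δ : ZMod 2} {a b : A} (ha : a ∈ P.degreePart ε)
    (hb : b ∈ P.degreePart δ) : a * b ∈ P.degreePart (ε + δ) := by
  fin_cases ε <;> fin_cases δ
  exacts [P.mul_ee a ha b hb, P.mul_eo a ha b hb, P.mul_oe a ha b hb, P.mul_oo a ha b hb]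

theorem homog_of_mem_degreePart {ε : ZMod 2} {a : A} (ha : a ∈ P.degreePart ε) : Homog P a := by
  fin_cases ε
  exacts [Or.inl ha, Or.inr ha]

theorem mem_od_iff_of_mem_degreePart {ε : ZMod 2} {a : A} (ha : a ∈ P.degreePart ε) (h0 : a ≠ 0) :
    a ∈ P.od ↔ ε = 1 := by
  fin_cases ε
  · exact iff_of_false (fun hod => h0 (Submodule.disjoint_def.1 P.compl.disjoint a ha hod))
      zero_ne_one
  · exact iff_of_true ha rfl

theorem mem_degreePart_zero_of_mem_aa {a : A} (ha : a ∈ P.aa) : a ∈ P.degreePart 0 :=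
  P.aa_le_ev ha

variable (P)

theorem bas_mem_degreePart (i : β) : P.bas i ∈ P.degreePart (P.degree i) := by
  unfold degree
  split_ifs with hi
  · exact P.bas_mem_od i hi
  · have : P.part i = 0 ∨ P.part i = 1 := by lia
    rcases this with hi | hi
    · exact P.aa_le_ev (P.bas_mem_aa i hi)
    · exact P.aa_sup_cc.le (Submodule.mem_sup_right (P.bas_mem_cc i hi))

theorem degree_eq_one_iff {i : β} : P.degree i = 1 ↔ P.part i = 2 := by
  unfold degree
  split_ifs with hi <;> simp [hi]

theorem bas_mem_od_iff [Nontrivial 𝕜] {i : β} : P.bas i ∈ P.od ↔ P.part i = 2 :=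
  (mem_od_iff_of_mem_degreePart (P.bas_mem_degreePart i) (P.bas.ne_zero i)).trans
    P.degree_eq_one_iff

/-- The elements of `B_𝔞` span `𝔞` by the modular law, since `B_𝔠` and `B_1` lie in the complement
`𝔠 ⊕ A_1` of `𝔞`. -/
theorem aa_eq_span : P.aa = Submodule.span 𝕜 (P.bas '' {i | P.part i = 0}) := by
  have hle : Submodule.span 𝕜 (P.bas '' {i | P.part i = 0}) ≤ P.aa :=
    Submodule.span_le.2 (Set.image_subset_iff.2 P.bas_mem_aa)
  have hdisj : Disjoint P.aa (P.cc ⊔ P.od) :=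
    (disjoint_iff.2 P.aa_inf_cc).disjoint_sup_right_of_disjoint_sup_left
      (P.aa_sup_cc.symm ▸ P.compl.disjoint)
  have htop : ⊤ ≤ Submodule.span 𝕜 (P.bas '' {i | P.part i = 0}) ⊔ (P.cc ⊔ P.od) := by
    rw [← P.bas.span_eq, Submodule.span_le]
    rintro _ ⟨i, rfl⟩
    have : P.part i = 0 ∨ P.part i = 1 ∨ P.part i = 2 := by lia
    rcases this with hi | hi | hi
    · exact Submodule.mem_sup_left (Submodule.subset_span ⟨i, hi, rfl⟩)
    · exact Submodule.mem_sup_right (Submodule.mem_sup_left (P.bas_mem_cc i hi))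
    · exact Submodule.mem_sup_right (Submodule.mem_sup_right (P.bas_mem_od i hi))
  exact (eq_of_le_of_inf_le_of_sup_le hle (by rw [hdisj.eq_bot]; exact bot_le)
    (le_top.trans htop)).symm

end GoodPair

theorem mul_mem_matrix {S S' S'' : Submodule 𝕜 A} (h : ∀ a ∈ S, ∀ b ∈ S', a * b ∈ S'')
    {x y : Matrix (Fin n) (Fin n) A} (hx : x ∈ S.matrix) (hy : y ∈ S'.matrix) :
    x * y ∈ S''.matrix := fun i j => by
  rw [Matrix.mul_apply]
  exact S''.sum_mem fun k _ => h _ (hx i k) _ (hy k j)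

theorem mul_mem_matrix_degreePart {P : GoodPair 𝕜 A β} {ε δ : ZMod 2}
    {x y : Matrix (Fin n) (Fin n) A} (hx : x ∈ (P.degreePart ε).matrix)
    (hy : y ∈ (P.degreePart δ).matrix) : x * y ∈ (P.degreePart (ε + δ)).matrix :=
  mul_mem_matrix (fun _ ha _ hb => GoodPair.mul_mem_degreePart ha hb) hx hy

theorem mem_matrix_degreePart_zero_of_mem_aa {P : GoodPair 𝕜 A β}
    {x : Matrix (Fin n) (Fin n) A} (hx : x ∈ P.aa.matrix) : x ∈ (P.degreePart 0).matrix :=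
  fun i j => GoodPair.mem_degreePart_zero_of_mem_aa (hx i j)

/-- An index `(b, r, s)` of the basis element `ξ^b_{r,s}` of `M_n(A)`. -/
abbrev Letter (β : Type) (n : ℕ) : Type := β × Fin n × Fin n

/-- The matrix unit `ξ^b_{r,s}`. -/
def GoodPair.matUnit (P : GoodPair 𝕜 A β) (v : Letter β n) : Matrix (Fin n) (Fin n) A :=
  Matrix.single v.2.1 v.2.2 (P.bas v.1)

theorem single_mem_matrix {S : Submodule 𝕜 A} {a : A} (ha : a ∈ S) (r s : Fin n) :
    Matrix.single r s a ∈ S.matrix := fun i j => by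
  rw [Matrix.single_apply]
  split_ifs
  exacts [ha, S.zero_mem]

theorem matUnit_mem_matrix_degreePart (P : GoodPair 𝕜 A β) (v : Letter β n) :
    P.matUnit v ∈ (P.degreePart (P.degree v.1)).matrix :=
  single_mem_matrix (P.bas_mem_degreePart v.1) _ _

theorem mem_span_matUnit (P : GoodPair 𝕜 A β) {I : Set β} {x : Matrix (Fin n) (Fin n) A}
    (hx : x ∈ (Submodule.span 𝕜 (P.bas '' I)).matrix) :
    x ∈ Submodule.span 𝕜 (P.matUnit '' {v : Letter β n | v.1 ∈ I}) := by
  rw [Matrix.matrix_eq_sum_single x]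
  refine sum_mem fun r _ => sum_mem fun s _ => ?_
  have hle : Submodule.span 𝕜 (P.bas '' I) ≤
      (Submodule.span 𝕜 (P.matUnit '' {v : Letter β n | v.1 ∈ I})).comap
        (Matrix.singleLinearMap 𝕜 r s) := by
    rw [Submodule.span_le]
    rintro _ ⟨i, hi, rfl⟩
    exact Submodule.subset_span ⟨(i, r, s), hi, rfl⟩
  exact hle (hx r s)

theorem span_range_matUnit (P : GoodPair 𝕜 A β) :
    Submodule.span 𝕜 (Set.range (P.matUnit (n := n))) = ⊤ := by
  refine eq_top_iff.2 fun x _ => ?_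
  have hx := mem_span_matUnit P (I := Set.univ) (x := x) fun i j => by
    rw [Set.image_univ, P.bas.span_eq]
    exact Submodule.mem_top
  simpa using hx

end Degrees

section Tensors

theorem multilinearMap_apply_mem_span {ι M V : Type} [Finite ι] [AddCommGroup M] [Module 𝕜 M]
    [AddCommGroup V] [Module 𝕜 V] (f : MultilinearMap 𝕜 (fun _ : ι => M) V) {S : ι → Set M}
    {x : ι → M} (hx : ∀ k, x k ∈ Submodule.span 𝕜 (S k)) :
    f x ∈ Submodule.span 𝕜 (f '' Set.univ.pi S) := by
  have := Fintype.ofFinite ι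
  suffices h : ∀ (I : Finset ι) (y : ι → M), (∀ k ∈ I, y k ∈ Submodule.span 𝕜 (S k)) →
      (∀ k ∉ I, y k ∈ S k) → f y ∈ Submodule.span 𝕜 (f '' Set.univ.pi S) from
    h univ x (fun k _ => hx k) fun k hk => absurd (mem_univ k) hk
  intro I
  induction I using Finset.induction_on with
  | empty => exact fun y _ hy => Submodule.subset_span ⟨y, fun k _ => hy k (notMem_empty k), rfl⟩
  | insert j I hj ih =>
    intro y hspan hy
    have hle : Submodule.span 𝕜 (S j) ≤
        (Submodule.span 𝕜 (f '' Set.univ.pi S)).comap (f.toLinearMap y j) := by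
      refine Submodule.span_le.2 fun z hz => ih _ (fun k hk => ?_) fun k hk => ?_
      · rw [Function.update_of_ne (ne_of_mem_of_not_mem hk hj)]
        exact hspan k (mem_insert_of_mem hk)
      · rcases eq_or_ne k j with rfl | hkj
        · rwa [Function.update_self]
        · rw [Function.update_of_ne hkj]
          exact hy k (by simp [hkj, hk])
    simpa using hle (hspan j (mem_insert_self j I))

namespace Tower

variable {P : GoodPair 𝕜 A β} (D : Tower 𝕜 A β n T P) {d : ℕ}

/-- The pure tensors of matrix units as a multilinear map of their entries. -/
def pureTensor (r s : Fin d → Fin n) : MultilinearMap 𝕜 (fun _ : Fin d => A) (T d) where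
  toFun a := D.X a r s
  map_update_add' := by
    intro inst a k x y
    rw [Subsingleton.elim inst]
    exact D.X_update_add a r s k x y
  map_update_smul' := by
    intro inst a k c x
    rw [Subsingleton.elim inst]
    exact D.X_update_smul a r s k c x

theorem X_eq_zero {a : Fin d → A} {k : Fin d} (hk : a k = 0) (r s : Fin d → Fin n) :
    D.X a r s = 0 :=
  (D.pureTensor r s).map_coord_zero k hk

theorem X_mul_of_mem_degreePart {p q : Fin d → ZMod 2} {a c : Fin d → A}
    (ha : ∀ k, a k ∈ P.degreePart (p k)) (hc : ∀ k, c k ∈ P.degreePart (q k))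
    (r s t u : Fin d → Fin n) :
    D.X a r s * D.X c t u =
      if s = t then ((-1 : ℤ) ^ koszulCount p q) • D.X (fun k => a k * c k) r u else 0 := by
  by_cases h0 : ∀ k, a k ≠ 0 ∧ c k ≠ 0
  · rw [D.X_mul a c r s t u (fun k => GoodPair.homog_of_mem_degreePart (ha k))
      fun k => GoodPair.homog_of_mem_degreePart (hc k)]
    simp only [koz, koszulCount, GoodPair.mem_od_iff_of_mem_degreePart (ha _) (h0 _).1,
      GoodPair.mem_od_iff_of_mem_degreePart (hc _) (h0 _).2]
  · push Not at h0
    obtain ⟨k, hk⟩ := h0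
    have hzero : D.X (fun k => a k * c k) r u = 0 := by
      refine D.X_eq_zero (k := k) ?_ r u
      by_cases hak : a k = 0
      · rw [hak, zero_mul]
      · rw [hk hak, mul_zero]
    rw [hzero, smul_zero, ite_self]
    by_cases hak : a k = 0
    · rw [D.X_eq_zero hak, zero_mul]
    · rw [D.X_eq_zero (hk hak), mul_zero]

theorem act_X_of_mem_degreePart (σ : Equiv.Perm (Fin d)) {p : Fin d → ZMod 2} {a : Fin d → A}
    (ha : ∀ k, a k ∈ P.degreePart (p k)) (r s : Fin d → Fin n) :
    D.act σ (D.X a r s) = ((-1 : ℤ) ^ inversionCount σ p) • D.X (a ∘ σ) (r ∘ σ) (s ∘ σ) := by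
  by_cases h0 : ∀ k, a k ≠ 0
  · rw [D.act_X σ a r s fun k => GoodPair.homog_of_mem_degreePart (ha k)]
    simp only [sgnc, inversionCount, GoodPair.mem_od_iff_of_mem_degreePart (ha _) (h0 _)]
  · push Not at h0
    obtain ⟨k, hk⟩ := h0
    rw [D.X_eq_zero hk, D.X_eq_zero (k := σ⁻¹ k) (by simpa using hk), map_zero, smul_zero]

/-- The tensor `x_1 ⊗ ⋯ ⊗ x_d` of matrices `x_k ∈ M_n(A)`. -/
def matTensor (d : ℕ) : MultilinearMap 𝕜 (fun _ : Fin d => Matrix (Fin n) (Fin n) A) (T d) :=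
  ∑ r : Fin d → Fin n, ∑ s : Fin d → Fin n,
    (D.pureTensor r s).compLinearMap fun k => Matrix.entryLinearMap 𝕜 A (r k) (s k)

theorem matTensor_apply (x : Fin d → Matrix (Fin n) (Fin n) A) :
    D.matTensor d x = ∑ r, ∑ s, D.X (fun k => x k (r k) (s k)) r s := by
  simp only [matTensor, _root_.sum_apply]
  rfl

theorem X_eq_matTensor (a : Fin d → A) (r s : Fin d → Fin n) :
    D.X a r s = D.matTensor d fun k => Matrix.single (r k) (s k) (a k) := by
  rw [matTensor_apply, sum_eq_single r, sum_eq_single s]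
  · simp only [Matrix.single_apply_same]
  · intro s' _ hs'
    obtain ⟨k, hk⟩ := Function.ne_iff.1 hs'
    exact D.X_eq_zero (k := k) (Matrix.single_apply_of_col_ne (r k) (r k) hk.symm (a k)) _ _
  · simp
  · intro r' _ hr'
    obtain ⟨k, hk⟩ := Function.ne_iff.1 hr'
    exact sum_eq_zero fun s' _ =>
      D.X_eq_zero (k := k) (Matrix.single_apply_of_row_ne hk.symm (s k) (s' k) (a k)) _ _
  · simp

variable {D}

theorem matTensor_mul {p q : Fin d → ZMod 2} {x y : Fin d → Matrix (Fin n) (Fin n) A}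
    (hx : ∀ k, x k ∈ (P.degreePart (p k)).matrix) (hy : ∀ k, y k ∈ (P.degreePart (q k)).matrix) :
    D.matTensor d x * D.matTensor d y =
      ((-1 : ℤ) ^ koszulCount p q) • D.matTensor d fun k => x k * y k := by
  have hmul : ∀ r s t u : Fin d → Fin n,
      D.X (fun k => x k (r k) (s k)) r s * D.X (fun k => y k (t k) (u k)) t u = if s = t then
        ((-1 : ℤ) ^ koszulCount p q) • D.X (fun k => x k (r k) (s k) * y k (t k) (u k)) r u
        else 0 := fun r s t u =>
    D.X_mul_of_mem_degreePart (fun k => hx k _ _) (fun k => hy k _ _) r s t u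
  have hexpand : ∀ r u : Fin d → Fin n, D.X (fun k => (x k * y k) (r k) (u k)) r u =
      ∑ s : Fin d → Fin n, D.X (fun k => x k (r k) (s k) * y k (s k) (u k)) r u := fun r u =>
    (D.pureTensor r u).map_sum fun k j => x k (r k) j * y k j (u k)
  rw [matTensor_apply, matTensor_apply, matTensor_apply, sum_mul, smul_sum]
  refine sum_congr rfl fun r _ => ?_
  rw [sum_mul]
  simp only [hexpand, mul_sum, smul_sum, hmul]
  refine Eq.trans (sum_congr rfl fun s _ => ?_) sum_comm
  rw [sum_comm]
  exact sum_congr rfl fun u _ => Fintype.sum_ite_eq s _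

theorem act_matTensor (σ : Equiv.Perm (Fin d)) {p : Fin d → ZMod 2}
    {x : Fin d → Matrix (Fin n) (Fin n) A} (hx : ∀ k, x k ∈ (P.degreePart (p k)).matrix) :
    D.act σ (D.matTensor d x) = ((-1 : ℤ) ^ inversionCount σ p) • D.matTensor d (x ∘ σ) := by
  have hreindex : ∀ F : (Fin d → Fin n) → T d, ∑ r, F r = ∑ r : Fin d → Fin n, F (r ∘ σ) := fun F =>
    ((σ.symm.arrowCongr (Equiv.refl (Fin n))).sum_comp F).symm
  rw [matTensor_apply, matTensor_apply,
    hreindex fun r => ∑ s, D.X (fun k => (x ∘ σ) k (r k) (s k)) r s]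
  simp only [map_sum, smul_sum]
  refine sum_congr rfl fun r _ => ?_
  rw [hreindex fun s => _ • D.X (fun k => (x ∘ σ) k ((r ∘ σ) k) (s k)) (r ∘ σ) s]
  exact sum_congr rfl fun s _ => D.act_X_of_mem_degreePart σ (fun k => hx k _ _) r s

end Tower
end Tensors

section Words

/-- The set of the positions of the word `w` whose letters do not lie in `B_𝔞`. -/
def GoodPair.outsidePositions (P : GoodPair 𝕜 A β) {d : ℕ} (w : Fin d → Letter β n) :
    Set (Fin d) :=
  {k | ¬ P.part (w k).1 = 0}

variable {P : GoodPair 𝕜 A β} {d : ℕ}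

theorem mem_outsidePositions_of_degree_eq_one {w : Fin d → Letter β n} {k : Fin d}
    (hk : P.degree (w k).1 = 1) : k ∈ P.outsidePositions w := by
  intro h0
  rw [P.degree_eq_one_iff, h0] at hk
  exact absurd hk (by decide)

theorem matUnit_mem_matrix_aa {w : Fin d → Letter β n} {k : Fin d}
    (hk : k ∉ P.outsidePositions w) : P.matUnit (w k) ∈ P.aa.matrix :=
  single_mem_matrix (P.bas_mem_aa _ (not_not.1 hk)) _ _

namespace Tower

variable (D : Tower 𝕜 A β n T P)

/-- The basis of `M_n(A)^{⊗d}` formed by the tensors of matrix units, indexed by words of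
letters. -/
def wordBasis (d : ℕ) : Module.Basis (Fin d → Letter β n) 𝕜 (T d) :=
  (D.bas d).reindex
    { toFun := fun w k => (w.1 k, w.2.1 k, w.2.2 k)
      invFun := fun w => (fun k => (w k).1, fun k => (w k).2.1, fun k => (w k).2.2)
      left_inv := fun _ => rfl
      right_inv := fun _ => rfl }

theorem wordBasis_apply_eq_X (w : Fin d → Letter β n) : D.wordBasis d w =
    D.X (fun k => P.bas (w k).1) (fun k => (w k).2.1) (fun k => (w k).2.2) := by
  rw [wordBasis, Module.Basis.reindex_apply]
  exact D.bas_eq d _ _ _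

theorem wordBasis_apply (w : Fin d → Letter β n) :
    D.wordBasis d w = D.matTensor d fun k => P.matUnit (w k) :=
  (D.wordBasis_apply_eq_X w).trans (D.X_eq_matTensor _ _ _)

theorem isAddTorsionFree (D : Tower 𝕜 A β n T P) [IsAddTorsionFree 𝕜] :
    IsAddTorsionFree (T d) :=
  (D.wordBasis d).repr.injective.isAddTorsionFree (D.wordBasis d).repr.toAddMonoidHom

theorem act_wordBasis (σ : Equiv.Perm (Fin d)) (w : Fin d → Letter β n) :
    D.act σ (D.wordBasis d w) =
      ((-1 : ℤ) ^ inversionCount σ fun k => P.degree (w k).1) • D.wordBasis d (w ∘ σ) := by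
  rw [wordBasis_apply, act_matTensor σ fun k => matUnit_mem_matrix_degreePart P (w k),
    wordBasis_apply]
  rfl

theorem repr_act (σ : Equiv.Perm (Fin d)) (x : T d) (w : Fin d → Letter β n) :
    (D.wordBasis d).repr (D.act σ x) (w ∘ σ) =
      ((-1 : ℤ) ^ inversionCount σ fun k => P.degree (w k).1) • (D.wordBasis d).repr x w := by
  have hlin : (D.wordBasis d).coord (w ∘ σ) ∘ₗ D.act σ =
      ((-1 : ℤ) ^ inversionCount σ fun k => P.degree (w k).1) • (D.wordBasis d).coord w := by
    refine (D.wordBasis d).ext fun u => ?_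
    simp only [LinearMap.comp_apply, act_wordBasis, map_zsmul, LinearMap.smul_apply,
      Module.Basis.coord_apply, Module.Basis.repr_self, Finsupp.single_apply,
      σ.surjective.injective_comp_right.eq_iff]
    split_ifs with huw
    · rw [huw]
    · rw [smul_zero, smul_zero]
  exact LinearMap.congr_fun hlin x

theorem matTensor_mem_span {M : Set (Fin d)} {x : Fin d → Matrix (Fin n) (Fin n) A}
    (hx : ∀ k ∉ M, x k ∈ P.aa.matrix) :
    D.matTensor d x ∈ Submodule.span 𝕜 (D.wordBasis d '' {w | P.outsidePositions w ⊆ M}) := by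
  have hletters : ∀ k, x k ∈ Submodule.span 𝕜
      (P.matUnit '' {v : Letter β n | v.1 ∈ {i | k ∉ M → P.part i = 0}}) := by
    refine fun k => mem_span_matUnit P ?_
    by_cases hk : k ∈ M
    · simp only [hk, not_true_eq_false, false_implies, Set.ofPred_true, Set.image_univ,
        P.bas.span_eq]
      exact fun _ _ => Submodule.mem_top
    · simpa only [hk, not_false_eq_true, true_implies, ← P.aa_eq_span] using hx k hk
  refine Submodule.span_mono ?_ (multilinearMap_apply_mem_span (D.matTensor d) hletters)
  rintro _ ⟨y, hy, rfl⟩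
  choose w hw hwy using fun k => hy k (Set.mem_univ k)
  refine ⟨w, fun k hk => not_not.1 fun hkM => hk (hw k hkM), ?_⟩
  rw [wordBasis_apply]
  exact congrArg _ (funext hwy)

theorem matTensor_mem_span_X {x : Fin d → Matrix (Fin n) (Fin n) A}
    (hx : ∀ k, x k ∈ P.aa.matrix) : D.matTensor d x ∈
      Submodule.span 𝕜 {z | ∃ a r s, (∀ k, a k ∈ P.aa) ∧ z = D.X a r s} := by
  rw [matTensor_apply]
  exact sum_mem fun r _ => sum_mem fun s _ =>
    Submodule.subset_span ⟨_, _, _, fun k => hx k _ _, rfl⟩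

theorem act_matTensor_of_mem_aa (σ : Equiv.Perm (Fin d)) {x : Fin d → Matrix (Fin n) (Fin n) A}
    (hx : ∀ k, x k ∈ P.aa.matrix) : D.act σ (D.matTensor d x) = D.matTensor d (x ∘ σ) := by
  rw [act_matTensor (p := 0) σ fun k => mem_matrix_degreePart_zero_of_mem_aa (hx k),
    inversionCount_eq_zero (p := 0) fun _ h => absurd h zero_ne_one, pow_zero, one_smul]

theorem schurA_le_span : SchurA D d ≤
    Submodule.span 𝕜 (D.wordBasis d '' {w | P.outsidePositions w ⊆ ∅}) := by
  refine inf_le_left.trans (Submodule.span_le.2 ?_)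
  rintro _ ⟨a, r, s, ha, rfl⟩
  rw [X_eq_matTensor]
  exact D.matTensor_mem_span fun k _ => single_mem_matrix (ha k) _ _

end Tower

end Words

section Norm

variable {P : GoodPair 𝕜 A β} {d : ℕ}

namespace Tower

/-- The norm map `z ↦ ∑_σ z^σ` of the symmetric group `S_d`. -/
def normMap (D : Tower 𝕜 A β n T P) (d : ℕ) : T d →ₗ[𝕜] T d :=
  ∑ σ : Equiv.Perm (Fin d), D.act σ

variable {D : Tower 𝕜 A β n T P}

theorem normMap_apply (z : T d) : D.normMap d z = ∑ σ, D.act σ z := by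
  rw [normMap, LinearMap.sum_apply]

theorem normMap_act (τ : Equiv.Perm (Fin d)) (z : T d) :
    D.normMap d (D.act τ z) = D.normMap d z := by
  simp only [normMap_apply, D.act_act]
  exact Equiv.sum_comp (Equiv.mulLeft τ) fun σ => D.act σ z

theorem normMap_mem_schurS (z : T d) : D.normMap d z ∈ SchurS D d := by
  intro τ
  simp only [normMap_apply, map_sum, D.act_act]
  exact Equiv.sum_comp (Equiv.mulRight τ) fun σ => D.act σ z

theorem normMap_mul {v : T d} (hv : v ∈ SchurS D d) (z : T d) :
    D.normMap d (z * v) = D.normMap d z * v := by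
  simp only [normMap_apply, sum_mul, D.act_mul, hv _]

theorem normMap_eq_nsmul {v : T d} (hv : v ∈ SchurS D d) :
    D.normMap d v = Nat.card (⊤ : Subgroup (Equiv.Perm (Fin d))) • v := by
  rw [Subgroup.card_top, Nat.card_eq_fintype_card, normMap_apply]
  simp only [hv _, sum_const, card_univ]

end Tower

end Norm

section Slots

/-- The scalar matrix with diagonal entries `one`, which is the identity of `M_n(A)` when `one` is
the identity of `A`. -/
def unitMatrix (n : ℕ) (one : A) : Matrix (Fin n) (Fin n) A := Matrix.diagonal fun _ => one

variable {one : A}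

theorem mul_unitMatrix (hone : ∀ a : A, one * a = a ∧ a * one = a)
    (x : Matrix (Fin n) (Fin n) A) : x * unitMatrix n one = x := by
  ext r s
  rw [unitMatrix, Matrix.mul_diagonal, (hone _).2]

theorem unitMatrix_mul (hone : ∀ a : A, one * a = a ∧ a * one = a)
    (x : Matrix (Fin n) (Fin n) A) : unitMatrix n one * x = x := by
  ext r s
  rw [unitMatrix, Matrix.diagonal_mul, (hone _).1]

theorem unitMatrix_mem_matrix {S : Submodule 𝕜 A} (hone : one ∈ S) :
    unitMatrix n one ∈ S.matrix := fun i j => by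
  rw [unitMatrix, Matrix.diagonal_apply]
  split_ifs
  exacts [hone, S.zero_mem]

variable {P : GoodPair 𝕜 A β} {d : ℕ}

theorem update_unitMatrix_mem_matrix_degreePart (hone_aa : one ∈ P.aa) {ε : ZMod 2}
    {m : Matrix (Fin n) (Fin n) A} (hm : m ∈ (P.degreePart ε).matrix) (j k : Fin d) :
    Function.update (fun _ => unitMatrix n one) j m k ∈
      (P.degreePart ((Pi.single j ε : Fin d → ZMod 2) k)).matrix := by
  rcases eq_or_ne k j with rfl | hkj
  · simpa using hm
  · rw [Function.update_of_ne hkj, Pi.single_eq_of_ne hkj]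
    exact unitMatrix_mem_matrix (GoodPair.mem_degreePart_zero_of_mem_aa hone_aa)

namespace Tower

variable (D : Tower 𝕜 A β n T P)

theorem insSlot_eq_matTensor (one : A) (j : Fin d) (m : Matrix (Fin n) (Fin n) A) :
    insSlot D one j m = D.matTensor d (Function.update (fun _ => unitMatrix n one) j m) := by
  rw [insSlot, matTensor_apply, ← Fintype.sum_prod_type', sum_filter]
  refine sum_congr rfl ?_
  rintro ⟨r, s⟩ -
  split_ifs with hrs
  · congr 1
    funext k
    rcases eq_or_ne k j with rfl | hkj
    · simp
    · rw [if_neg hkj, Function.update_of_ne hkj, unitMatrix, hrs k hkj, Matrix.diagonal_apply_eq]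
  · push Not at hrs
    obtain ⟨k, hkj, hk⟩ := hrs
    refine (D.X_eq_zero (k := k) ?_ r s).symm
    rw [Function.update_of_ne hkj, unitMatrix, Matrix.diagonal_apply_ne _ hk]

/-- The map `m ↦ 1^{⊗(d-1)} * m` from `M_n(A)` to the symmetric tensors. -/
def slotSum (one : A) (d : ℕ) : Matrix (Fin n) (Fin n) A →ₗ[𝕜] T d :=
  ∑ j, (D.matTensor d).toLinearMap (fun _ => unitMatrix n one) j

theorem slotSum_apply (m : Matrix (Fin n) (Fin n) A) :
    D.slotSum one d m = ∑ j : Fin d, insSlot D one j m := by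
  simp only [slotSum, LinearMap.sum_apply, insSlot_eq_matTensor, MultilinearMap.toLinearMap_apply]

theorem act_insSlot (hone_aa : one ∈ P.aa) (σ : Equiv.Perm (Fin d)) (j : Fin d) {ε : ZMod 2}
    {m : Matrix (Fin n) (Fin n) A} (hm : m ∈ (P.degreePart ε).matrix) :
    D.act σ (insSlot D one j m) = insSlot D one (σ⁻¹ j) m := by
  rw [insSlot_eq_matTensor, insSlot_eq_matTensor,
    act_matTensor σ (update_unitMatrix_mem_matrix_degreePart hone_aa hm j), inversionCount_single,
    pow_zero, one_smul, Function.update_comp_equiv]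
  rfl

theorem slotSum_mem_schurS (hone_aa : one ∈ P.aa) (m : Matrix (Fin n) (Fin n) A) :
    D.slotSum one d m ∈ SchurS D d := by
  have hle : Submodule.span 𝕜 (Set.range P.matUnit) ≤ (SchurS D d).comap (D.slotSum one d) := by
    rw [Submodule.span_le]
    rintro _ ⟨v, rfl⟩ σ
    simp only [slotSum_apply, map_sum,
      D.act_insSlot hone_aa σ _ (matUnit_mem_matrix_degreePart P v)]
    exact Equiv.sum_comp σ⁻¹ fun j => insSlot D one j (P.matUnit v)
  exact hle (span_range_matUnit P ▸ Submodule.mem_top)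

theorem slotSum_mem_schurA (hone_aa : one ∈ P.aa) {m : Matrix (Fin n) (Fin n) A}
    (hm : m ∈ P.aa.matrix) : D.slotSum one d m ∈ SchurA D d := by
  refine ⟨?_, D.slotSum_mem_schurS hone_aa m⟩
  rw [slotSum_apply]
  refine sum_mem fun j _ => ?_
  rw [insSlot_eq_matTensor]
  refine D.matTensor_mem_span_X ((Function.forall_update_iff _ _).2 ⟨hm, fun k _ => ?_⟩)
  exact unitMatrix_mem_matrix hone_aa

theorem matTensor_mul_insSlot (hone_aa : one ∈ P.aa) (hone : ∀ a : A, one * a = a ∧ a * one = a)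
    {p : Fin d → ZMod 2} {x : Fin d → Matrix (Fin n) (Fin n) A}
    (hx : ∀ k, x k ∈ (P.degreePart (p k)).matrix) (j : Fin d) {ε : ZMod 2}
    {m : Matrix (Fin n) (Fin n) A} (hm : m ∈ (P.degreePart ε).matrix) :
    D.matTensor d x * insSlot D one j m = ((-1 : ℤ) ^ koszulCount p (Pi.single j ε)) •
      D.matTensor d (Function.update x j (x j * m)) := by
  rw [insSlot_eq_matTensor,
    matTensor_mul hx (update_unitMatrix_mem_matrix_degreePart hone_aa hm j)]
  congr 2
  funext k
  rcases eq_or_ne k j with rfl | hkj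
  · simp only [Function.update_self]
  · rw [Function.update_of_ne hkj, Function.update_of_ne hkj, mul_unitMatrix hone]

/-- The identity `1^{⊗d}` of `M_n(A)^{⊗d}`, where `1` is the identity of `A`. -/
def unitTensor (one : A) (d : ℕ) : T d := D.matTensor d fun _ => unitMatrix n one

theorem unitTensor_mem_schurA (hone_aa : one ∈ P.aa) : D.unitTensor one d ∈ SchurA D d := by
  have hmem : ∀ _ : Fin d, unitMatrix n one ∈ P.aa.matrix := fun _ => unitMatrix_mem_matrix hone_aa
  exact ⟨D.matTensor_mem_span_X hmem, fun σ => D.act_matTensor_of_mem_aa σ hmem⟩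

theorem unitTensor_mul [SMulCommClass 𝕜 (T d) (T d)] (hone_aa : one ∈ P.aa)
    (hone : ∀ a : A, one * a = a ∧ a * one = a) (x : T d) :
    D.unitTensor one d * x = x := by
  have hid : LinearMap.mulLeft 𝕜 (D.unitTensor one d) = LinearMap.id := by
    refine (D.wordBasis d).ext fun w => ?_
    rw [LinearMap.mulLeft_apply, LinearMap.id_apply, wordBasis_apply, unitTensor,
      matTensor_mul (p := 0) (fun _ => mem_matrix_degreePart_zero_of_mem_aa
        (unitMatrix_mem_matrix hone_aa)) fun k => matUnit_mem_matrix_degreePart P (w k)]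
    simp only [unitMatrix_mul hone]
    simp [koszulCount]
  exact LinearMap.congr_fun hid x

end Tower

end Slots

section OrbitBasis

variable {P : GoodPair 𝕜 A β} {d : ℕ}

/-- The condition `(𝐛,𝐫,𝐬) ∈ Tri^B(n,d)` for a word of letters `(b_k, r_k, s_k)`. -/
def GoodPair.IsTriWord (P : GoodPair 𝕜 A β) (w : Fin d → Letter β n) : Prop :=
  IsTriB P (fun k => (w k).1) (fun k => (w k).2.1) fun k => (w k).2.2

theorem GoodPair.isTriWord_iff {w : Fin d → Letter β n} :
    P.IsTriWord w ↔ ∀ k l, k ≠ l → P.degree (w k).1 = 1 → w k ≠ w l := by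
  simp only [IsTriWord, IsTriB, P.degree_eq_one_iff]
  exact forall₃_congr fun k l _ => imp_not_comm

/-- The element `η^𝐛_{𝐫,𝐬}` for a word of letters `(b_k, r_k, s_k)`. -/
def Tower.wordEta (D : Tower 𝕜 A β n T P) (ord : LinearOrder (A × Fin n × Fin n))
    (w : Fin d → Letter β n) : T d :=
  eta D ord (fun k => (w k).1) (fun k => (w k).2.1) fun k => (w k).2.2

/-- The exponent `⟨𝐛,𝐫,𝐬⟩` for a word of letters `(b_k, r_k, s_k)`. -/
def GoodPair.signExponent (P : GoodPair 𝕜 A β) (ord : LinearOrder (A × Fin n × Fin n))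
    (w : Fin d → Letter β n) : ℕ :=
  letterInversionCount ord (fun k => P.degree (w k).1)
    fun k => (P.bas (w k).1, (w k).2.1, (w k).2.2)

theorem GoodPair.ang_eq_signExponent [Nontrivial 𝕜] (ord : LinearOrder (A × Fin n × Fin n))
    (w : Fin d → Letter β n) :
    ang P.od ord (fun k => P.bas (w k).1) (fun k => (w k).2.1) (fun k => (w k).2.2) =
      P.signExponent ord w := by
  simp only [ang, signExponent, letterInversionCount, P.bas_mem_od_iff, P.degree_eq_one_iff]

/-- The letters in `B_1` do not repeat, so they contribute factors `1! = 1` only. -/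
theorem card_markedStabilizer_empty_eq_mul {w : Fin d → Letter β n} (hw : P.IsTriWord w) :
    Nat.card (markedStabilizer ∅ w) = Nat.card (markedStabilizer (P.outsidePositions w) w) *
      facSel (fun i => P.part i = 1) (fun k => (w k).1) (fun k => (w k).2.1)
        fun k => (w k).2.2 := by
  have hempty : (∅ : Set (Fin d)) = {k | ¬ (fun _ : Letter β n => True) (w k)} := by
    simp
  have hodd : ∀ v : Letter β n, P.part v.1 = 2 → (#{k | w k = v}).factorial = 1 := by
    refine fun v hv => Nat.factorial_eq_one.2 (card_le_one.2 fun k hk l hl => ?_)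
    simp only [mem_filter, mem_univ, true_and] at hk hl
    by_contra hkl
    exact GoodPair.isTriWord_iff.1 hw k l hkl (P.degree_eq_one_iff.2 (hk ▸ hv)) (hk.trans hl.symm)
  rw [hempty, card_markedStabilizer fun _ : Letter β n => True, GoodPair.outsidePositions,
    card_markedStabilizer fun v : Letter β n => P.part v.1 = 0, filter_true,
    ← prod_filter_mul_prod_filter_not (univ.image w) fun v => P.part v.1 = 0]
  congr 1
  refine (prod_subset (fun v hv => ?_) fun v hv hv' => ?_).symm
  · simp only [mem_filter] at hv ⊢
    exact ⟨hv.1, by rw [hv.2]; decide⟩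
  · simp only [mem_filter, not_and] at hv hv'
    have part_eq_two : ∀ q : Fin 3, q ≠ 0 → q ≠ 1 → q = 2 := by decide
    exact hodd v (part_eq_two _ hv.2 (hv' hv.1))

namespace Tower

theorem xiB_eq_sum [Nontrivial 𝕜] (D : Tower 𝕜 A β n T P) (ord : LinearOrder (A × Fin n × Fin n))
    (w : Fin d → Letter β n) :
    xiB D ord (fun k => (w k).1) (fun k => (w k).2.1) (fun k => (w k).2.2) =
      ∑ u ∈ univ.image fun σ : Equiv.Perm (Fin d) => w ∘ σ,
        ((-1 : ℤ) ^ (P.signExponent ord w + P.signExponent ord u)) • D.wordBasis d u := by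
  let triple : (Fin d → Letter β n) → (Fin d → A) × (Fin d → Fin n) × (Fin d → Fin n) :=
    fun u => (fun k => P.bas (u k).1, fun k => (u k).2.1, fun k => (u k).2.2)
  have hinj : Function.Injective triple := by
    intro u u' h
    simp only [triple, Prod.mk.injEq, funext_iff, P.bas.injective.eq_iff] at h
    exact funext fun k => Prod.ext (h.1 k) (Prod.ext (h.2.1 k) (h.2.2 k))
  have himage : (univ.image fun σ : Equiv.Perm (Fin d) =>
      ((fun k => P.bas (w k).1) ∘ σ, (fun k => (w k).2.1) ∘ σ, (fun k => (w k).2.2) ∘ σ)) =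
      (univ.image fun σ : Equiv.Perm (Fin d) => w ∘ σ).image triple := by
    rw [image_image]
    congr!
  rw [xiB, xiH, himage, sum_image hinj.injOn, GoodPair.ang_eq_signExponent]
  refine sum_congr rfl fun u _ => ?_
  rw [GoodPair.ang_eq_signExponent, wordBasis_apply_eq_X]

variable {D : Tower 𝕜 A β n T P}

theorem normMap_wordBasis [Nontrivial 𝕜] (ord : LinearOrder (A × Fin n × Fin n))
    {w : Fin d → Letter β n} (hw : P.IsTriWord w) :
    D.normMap d (D.wordBasis d w) =
      Nat.card (markedStabilizer (P.outsidePositions w) w) • D.wordEta ord w := by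
  have hact : ∀ σ : Equiv.Perm (Fin d), D.act σ (D.wordBasis d w) =
      ((-1 : ℤ) ^ (P.signExponent ord w + P.signExponent ord (w ∘ σ))) •
        D.wordBasis d (w ∘ σ) := by
    intro σ
    rw [act_wordBasis]
    refine congrArg (· • _) (neg_one_pow_congr (Nat.even_add.1 ?_))
    refine even_inversionCount_add ord σ fun k l hkl hk h => ?_
    simp only [Prod.mk.injEq, P.bas.injective.eq_iff] at h
    exact GoodPair.isTriWord_iff.1 hw k l hkl hk (Prod.ext h.1 (Prod.ext h.2.1 h.2.2))
  simp only [normMap_apply, hact]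
  rw [wordEta, eta, ← mul_smul, ← card_markedStabilizer_empty_eq_mul hw, xiB_eq_sum]
  exact sum_comp_eq_card_nsmul _ _ (comp_eq_comp_iff_mem_markedStabilizer w) fun u =>
    ((-1 : ℤ) ^ (P.signExponent ord w + P.signExponent ord u)) • D.wordBasis d u

theorem normMap_wordBasis_eq_zero [IsAddTorsionFree 𝕜] {w : Fin d → Letter β n}
    (hw : ¬ P.IsTriWord w) : D.normMap d (D.wordBasis d w) = 0 := by
  obtain ⟨k, l, hkl, hk, hwkl⟩ : ∃ k l, k < l ∧ P.degree (w k).1 = 1 ∧ w k = w l := by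
    rw [GoodPair.isTriWord_iff] at hw
    push Not at hw
    obtain ⟨k, l, hkl, hk, hwkl⟩ := hw
    rcases hkl.lt_or_gt with h | h
    · exact ⟨k, l, h, hk, hwkl⟩
    · exact ⟨l, k, h, hwkl ▸ hk, hwkl.symm⟩
  have hswap : w ∘ Equiv.swap k l = w := funext (Equiv.apply_swap_eq_self hwkl)
  have hneg : D.act (Equiv.swap k l) (D.wordBasis d w) = -D.wordBasis d w := by
    rw [act_wordBasis, hswap, (odd_inversionCount_swap hkl hk (hwkl ▸ hk)).neg_one_pow,
      neg_one_smul]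
  have := D.isAddTorsionFree (d := d)
  exact self_eq_neg.1 (by rw [← map_neg, ← hneg, normMap_act])

theorem normMap_wordBasis_mem_natMultiples [Nontrivial 𝕜] [IsAddTorsionFree 𝕜]
    (ord : LinearOrder (A × Fin n × Fin n)) (w : Fin d → Letter β n) :
    D.normMap d (D.wordBasis d w) ∈
      natMultiples (Nat.card (markedStabilizer (P.outsidePositions w) w)) (SchurT D ord d) := by
  by_cases hw : P.IsTriWord w
  · rw [normMap_wordBasis ord hw]
    exact nsmul_mem_natMultiples (Submodule.subset_span ⟨_, _, _, hw, rfl⟩)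
  · rw [normMap_wordBasis_eq_zero hw]
    exact Submodule.zero_mem _

end Tower

end OrbitBasis

section Closure

theorem card_dvd_card_of_forall_coe_mem {G : Type} [Group G] {H K : Subgroup G} {S : Subgroup H}
    (h : ∀ g ∈ S, (g : G) ∈ K) : Nat.card S ∣ Nat.card K := by
  rw [← Subgroup.card_subtype]
  exact Subgroup.card_dvd_of_le (Subgroup.map_le_iff_le_comap.2 h)

theorem card_dvd_card_of_forall_exists_mem {G : Type} [Group G] {H K : Subgroup G} {S : Subgroup H}
    (h : ∀ g ∈ K, ∃ hg : g ∈ H, ⟨g, hg⟩ ∈ S) : Nat.card K ∣ Nat.card S := by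
  rw [← Subgroup.card_subtype]
  refine Subgroup.card_dvd_of_le fun g hg => ?_
  obtain ⟨hgH, hgS⟩ := h g hg
  exact ⟨_, hgS, rfl⟩

namespace Tower

variable {P : GoodPair 𝕜 A β} {D : Tower 𝕜 A β n T P} {d : ℕ}

theorem normMap_eq_sum_repr (z : T d) : D.normMap d z =
    ∑ u ∈ ((D.wordBasis d).repr z).support,
      (D.wordBasis d).repr z u • D.normMap d (D.wordBasis d u) := by
  conv_lhs => rw [← (D.wordBasis d).linearCombination_repr z]
  rw [Finsupp.linearCombination_apply, Finsupp.sum, map_sum]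
  simp only [map_smul]

theorem repr_comp_of_act_eq {σ : Equiv.Perm (Fin d)} {z : T d} (hz : D.act σ z = z)
    (u : Fin d → Letter β n) : (D.wordBasis d).repr z (u ∘ σ) =
      ((-1 : ℤ) ^ inversionCount σ fun k => P.degree (u k).1) • (D.wordBasis d).repr z u := by
  conv_lhs => rw [← hz]
  exact D.repr_act σ z u

/-- The signs of `repr_comp_of_act_eq` and of the action on the basis cancel. -/
theorem repr_smul_normMap_comp {σ : Equiv.Perm (Fin d)} {z : T d} (hz : D.act σ z = z)
    (u : Fin d → Letter β n) :
    (D.wordBasis d).repr z (u ∘ σ) • D.normMap d (D.wordBasis d (u ∘ σ)) =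
      (D.wordBasis d).repr z u • D.normMap d (D.wordBasis d u) := by
  rw [← normMap_act σ (D.wordBasis d u), act_wordBasis, repr_comp_of_act_eq hz, map_zsmul,
    smul_assoc, smul_comm]

theorem normMap_mem_natMultiples_schurT [Nontrivial 𝕜] [IsAddTorsionFree 𝕜]
    (ord : LinearOrder (A × Fin n × Fin n)) {H : Subgroup (Equiv.Perm (Fin d))} {z : T d}
    (hz : ∀ h ∈ H, D.act h z = z) {Ω : Set (Fin d → Letter β n)}
    (hzΩ : z ∈ Submodule.span 𝕜 (D.wordBasis d '' Ω))
    (hΩ : ∀ u ∈ Ω, ∀ h ∈ H, u ∘ h = u → ∀ k ∈ P.outsidePositions u, h k = k) :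
    D.normMap d z ∈ natMultiples (Nat.card H) (SchurT D ord d) := by
  let _ : MulAction H (Fin d → Letter β n) := arrowAction
  have hsmul : ∀ (h : H) (u : Fin d → Letter β n), h • u = u ∘ (h⁻¹ : Equiv.Perm (Fin d)) :=
    fun _ _ => rfl
  have hz' : ∀ h : H, D.act (h⁻¹ : Equiv.Perm (Fin d)) z = z := fun h => hz _ (H.inv_mem h.2)
  rw [normMap_eq_sum_repr]
  refine sum_mem_natMultiples_card (fun h u hu => ?_)
    (fun h u => hsmul h u ▸ repr_smul_normMap_comp (hz' h) u) fun u hu =>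
      Submodule.smul_mem _ _ (natMultiples_le_of_dvd
        (card_dvd_card_of_forall_coe_mem fun h hh => ?_)
        (normMap_wordBasis_mem_natMultiples ord u))
  · rw [Finsupp.mem_support_iff] at hu ⊢
    rw [hsmul, repr_comp_of_act_eq (hz' h)]
    rcases neg_one_pow_eq_or ℤ
      (inversionCount (h⁻¹ : Equiv.Perm (Fin d)) fun k => P.degree (u k).1) with h1 | h1 <;>
      simpa [h1] using hu
  · have hfix : u ∘ (h : Equiv.Perm (Fin d)) = u := by
      have hinv := MulAction.mem_stabilizer_iff.1 (inv_mem hh)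
      rwa [hsmul, Subgroup.coe_inv, inv_inv] at hinv
    exact ⟨hΩ u ((D.wordBasis d).mem_span_image.1 hzΩ hu) h h.2 hfix, hfix⟩

theorem schurA_le_schurT [Nontrivial 𝕜] [IsAddTorsionFree 𝕜]
    (ord : LinearOrder (A × Fin n × Fin n)) : SchurA D d ≤ SchurT D ord d := by
  intro v hv
  have hmem : D.normMap d v ∈ natMultiples (Nat.card (⊤ : Subgroup _)) (SchurT D ord d) :=
    normMap_mem_natMultiples_schurT ord (fun h _ => hv.2 h) (schurA_le_span D hv)
      fun u hu h _ _ k hk => absurd (hu hk) (Set.notMem_empty k)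
  have := D.isAddTorsionFree (d := d)
  rwa [normMap_eq_nsmul hv.2, nsmul_mem_natMultiples_iff Nat.card_pos.ne'] at hmem

theorem wordEta_mul_mem_schurT [Nontrivial 𝕜] [IsAddTorsionFree 𝕜]
    (ord : LinearOrder (A × Fin n × Fin n)) {w : Fin d → Letter β n} (hw : P.IsTriWord w)
    {v : T d} (hv : v ∈ SchurS D d)
    (hspan : D.wordBasis d w * v ∈ Submodule.span 𝕜
      (D.wordBasis d '' {u | (P.outsidePositions u \ P.outsidePositions w).Subsingleton})) :
    D.wordEta ord w * v ∈ SchurT D ord d := by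
  have hfix : ∀ h ∈ markedStabilizer (P.outsidePositions w) w,
      D.act h (D.wordBasis d w * v) = D.wordBasis d w * v := fun h hh => by
    rw [D.act_mul, hv h, act_wordBasis, hh.2, inversionCount_eq_zero fun k hk =>
      hh.1 k (mem_outsidePositions_of_degree_eq_one hk), pow_zero, one_smul]
  have hmem := normMap_mem_natMultiples_schurT ord hfix hspan fun u hu h hh huh k hk => by
    by_cases hkw : k ∈ P.outsidePositions w
    · exact hh.1 k hkw
    have hhk : h k ∈ P.outsidePositions u := by
      rwa [GoodPair.outsidePositions, Set.mem_ofPred_eq, ← Function.comp_apply (f := u), huh]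
    by_cases hhkw : h k ∈ P.outsidePositions w
    · exact h.injective (hh.1 _ hhkw)
    · exact hu ⟨hhk, hhkw⟩ ⟨hk, hkw⟩
  have := D.isAddTorsionFree (d := d)
  rwa [normMap_mul hv, normMap_wordBasis ord hw, smul_mul_assoc,
    nsmul_mem_natMultiples_iff Nat.card_pos.ne'] at hmem

theorem mul_mem_schurT_of_forall_wordBasis_mul_mem [IsScalarTower 𝕜 (T d) (T d)]
    [Nontrivial 𝕜] [IsAddTorsionFree 𝕜]
    (ord : LinearOrder (A × Fin n × Fin n)) {v : T d} (hv : v ∈ SchurS D d)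
    (hspan : ∀ w, D.wordBasis d w * v ∈ Submodule.span 𝕜
      (D.wordBasis d '' {u | (P.outsidePositions u \ P.outsidePositions w).Subsingleton}))
    {t : T d} (ht : t ∈ SchurT D ord d) : t * v ∈ SchurT D ord d := by
  have hle : SchurT D ord d ≤ (SchurT D ord d).comap (LinearMap.mulRight 𝕜 v) := by
    refine Submodule.span_le.2 ?_
    rintro _ ⟨b, r, s, hw, rfl⟩
    exact wordEta_mul_mem_schurT (w := fun k => (b k, r k, s k)) ord hw hv (hspan _)
  exact hle ht

theorem wordBasis_mul_mem_span_of_mem_schurA [SMulCommClass 𝕜 (T d) (T d)]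
    (w : Fin d → Letter β n) {v : T d}
    (hv : v ∈ SchurA D d) : D.wordBasis d w * v ∈
      Submodule.span 𝕜 (D.wordBasis d '' {u | P.outsidePositions u ⊆ P.outsidePositions w}) := by
  have hle : Submodule.span 𝕜 {x | ∃ a r s, (∀ k, a k ∈ P.aa) ∧ x = D.X a r s} ≤
      (Submodule.span 𝕜 (D.wordBasis d '' {u | P.outsidePositions u ⊆ P.outsidePositions w})).comap
        (LinearMap.mulLeft 𝕜 (D.wordBasis d w)) := by
    refine Submodule.span_le.2 ?_
    rintro _ ⟨a, r, s, ha, rfl⟩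
    have hmem : ∀ k, Matrix.single (r k) (s k) (a k) ∈ P.aa.matrix :=
      fun k => single_mem_matrix (ha k) _ _
    rw [SetLike.mem_coe, Submodule.mem_comap, LinearMap.mulLeft_apply, wordBasis_apply,
      X_eq_matTensor, matTensor_mul (q := 0) (fun k => matUnit_mem_matrix_degreePart P (w k))
        fun k => mem_matrix_degreePart_zero_of_mem_aa (hmem k)]
    exact zsmul_mem (D.matTensor_mem_span fun k hk =>
      mul_mem_matrix P.aa_mul (matUnit_mem_matrix_aa hk) (hmem k)) _
  exact hle hv.1

theorem mul_mem_schurT_of_mem_schurA [SMulCommClass 𝕜 (T d) (T d)]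
    [IsScalarTower 𝕜 (T d) (T d)] [Nontrivial 𝕜] [IsAddTorsionFree 𝕜]
    (ord : LinearOrder (A × Fin n × Fin n)) {v : T d} (hv : v ∈ SchurA D d) {t : T d}
    (ht : t ∈ SchurT D ord d) : t * v ∈ SchurT D ord d := by
  refine mul_mem_schurT_of_forall_wordBasis_mul_mem ord hv.2 (fun w => ?_) ht
  refine Submodule.span_mono (Set.image_mono fun u hu => ?_)
    (wordBasis_mul_mem_span_of_mem_schurA w hv)
  rw [Set.mem_ofPred_eq, Set.sdiff_eq_empty.2 hu]
  exact Set.subsingleton_empty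

theorem mul_slotSum_mem_schurT [SMulCommClass 𝕜 (T d) (T d)]
    [IsScalarTower 𝕜 (T d) (T d)] [Nontrivial 𝕜] [IsAddTorsionFree 𝕜]
    (ord : LinearOrder (A × Fin n × Fin n)) {one : A} (hone_aa : one ∈ P.aa)
    (hone : ∀ a : A, one * a = a ∧ a * one = a) (m : Matrix (Fin n) (Fin n) A) {t : T d}
    (ht : t ∈ SchurT D ord d) : t * D.slotSum one d m ∈ SchurT D ord d := by
  have hle : Submodule.span 𝕜 (Set.range P.matUnit) ≤
      (SchurT D ord d).comap (LinearMap.mulLeft 𝕜 t ∘ₗ D.slotSum one d) := by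
    refine Submodule.span_le.2 ?_
    rintro _ ⟨v, rfl⟩
    refine mul_mem_schurT_of_forall_wordBasis_mul_mem ord
      (D.slotSum_mem_schurS hone_aa (P.matUnit v)) (fun w => ?_) ht
    rw [slotSum_apply, mul_sum]
    refine sum_mem fun j _ => ?_
    rw [wordBasis_apply, matTensor_mul_insSlot D hone_aa hone
      (fun k => matUnit_mem_matrix_degreePart P (w k)) j (matUnit_mem_matrix_degreePart P v)]
    refine zsmul_mem (Submodule.span_mono (Set.image_mono fun u hu => ?_) (D.matTensor_mem_span
      (M := insert j (P.outsidePositions w)) fun k hk => ?_)) _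
    · exact (Set.subsingleton_singleton (a := j)).anti
        (Set.sdiff_subset_iff.2 (by rwa [Set.union_singleton]))
    · rw [Set.mem_insert_iff, not_or] at hk
      rw [Function.update_of_ne hk.1]
      exact matUnit_mem_matrix_aa hk.2
  exact hle (span_range_matUnit P ▸ Submodule.mem_top)

theorem adjoin_schurA_slotSum_subset_schurT [SMulCommClass 𝕜 (T d) (T d)]
    [IsScalarTower 𝕜 (T d) (T d)] [Nontrivial 𝕜] [IsAddTorsionFree 𝕜]
    (ord : LinearOrder (A × Fin n × Fin n)) {one : A} (hone_aa : one ∈ P.aa)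
    (hone : ∀ a : A, one * a = a ∧ a * one = a) :
    (NonUnitalAlgebra.adjoin 𝕜 (SchurA D d ∪ Set.range (D.slotSum one d)) : Set (T d)) ⊆
      SchurT D ord d := by
  intro x hx
  have hmul : ∀ t ∈ SchurT D ord d, t * x ∈ SchurT D ord d := by
    induction hx using NonUnitalAlgebra.adjoin_induction with
    | mem x hx =>
      rcases hx with hx | ⟨m, rfl⟩
      · exact fun t ht => mul_mem_schurT_of_mem_schurA ord hx ht
      · exact fun t ht => mul_slotSum_mem_schurT ord hone_aa hone m ht
    | add x y _ _ hx hy =>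
      exact fun t ht => by rw [mul_add]; exact add_mem (hx t ht) (hy t ht)
    | zero => exact fun t _ => by rw [mul_zero]; exact zero_mem _
    | mul x y _ _ hx hy => exact fun t ht => by rw [← mul_assoc]; exact hy _ (hx t ht)
    | smul c x _ hx =>
      exact fun t ht => by rw [mul_smul_comm]; exact Submodule.smul_mem _ c (hx t ht)
  rw [← D.unitTensor_mul hone_aa hone x]
  exact hmul _ (schurA_le_schurT ord (D.unitTensor_mem_schurA hone_aa))

end Tower

end Closure

section Generation

section Updates

variable {ι γ : Type} [DecidableEq ι] {M : Set ι} {f : ι → γ} {σ : Equiv.Perm ι} {j : ι}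

theorem update_comp_eq_update (hσ : f ∘ σ = f) (hj : σ j = j) (x : γ) :
    Function.update f j x ∘ σ = Function.update f j x := by
  rw [Function.update_comp_equiv, hσ, (Equiv.symm_apply_eq σ).2 hj.symm]

theorem mem_markedStabilizer_insert_update (hσ : σ ∈ markedStabilizer M f) (hj : σ j = j) (x : γ) :
    σ ∈ markedStabilizer (insert j M) (Function.update f j x) :=
  ⟨Set.forall_mem_insert.2 ⟨hj, hσ.1⟩, update_comp_eq_update hσ.2 hj x⟩

theorem mem_markedStabilizer_diff_update (hσ : σ ∈ markedStabilizer M f) (hj : j ∈ M) (x : γ) :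
    σ ∈ markedStabilizer (M \ {j}) (Function.update f j x) :=
  ⟨fun k hk => hσ.1 k hk.1, update_comp_eq_update hσ.2 (hσ.1 j hj) x⟩

theorem swap_mem_markedStabilizer {k : ι} (hj : j ∉ M) (hk : k ∉ M) (hf : f j = f k) :
    Equiv.swap j k ∈ markedStabilizer M f :=
  ⟨fun _ hl => Equiv.swap_apply_of_ne_of_ne (ne_of_mem_of_not_mem hl hj)
    (ne_of_mem_of_not_mem hl hk), funext (Equiv.apply_swap_eq_self hf)⟩

end Updates

variable {P : GoodPair 𝕜 A β} {d : ℕ} {one : A}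

/-- A word `w` of homogeneous matrices, of degrees `p`, which are matrices over `𝔞` outside the
set `M` of marked positions. -/
structure IsMarkedWord (P : GoodPair 𝕜 A β) (M : Set (Fin d)) (p : Fin d → ZMod 2)
    (w : Fin d → Matrix (Fin n) (Fin n) A) : Prop where
  mem_degreePart : ∀ k, w k ∈ (P.degreePart (p k)).matrix
  degree_eq_zero : ∀ k ∉ M, p k = 0
  mem_aa : ∀ k ∉ M, w k ∈ P.aa.matrix

namespace IsMarkedWord

variable {M : Set (Fin d)} {p : Fin d → ZMod 2} {w : Fin d → Matrix (Fin n) (Fin n) A}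

theorem update_unitMatrix (hw : IsMarkedWord P M p w) (hone_aa : one ∈ P.aa) (j : Fin d) :
    IsMarkedWord P (M \ {j}) (Function.update p j 0) (Function.update w j (unitMatrix n one)) where
  mem_degreePart k := by
    rcases eq_or_ne k j with rfl | hkj
    · simpa only [Function.update_self] using
        mem_matrix_degreePart_zero_of_mem_aa (unitMatrix_mem_matrix hone_aa)
    · simpa only [Function.update_of_ne hkj] using hw.mem_degreePart k
  degree_eq_zero k hk := by
    rcases eq_or_ne k j with rfl | hkj
    · exact Function.update_self _ _ _
    · rw [Function.update_of_ne hkj]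
      exact hw.degree_eq_zero k fun hkM => hk ⟨hkM, hkj⟩
  mem_aa k hk := by
    rcases eq_or_ne k j with rfl | hkj
    · simpa only [Function.update_self] using unitMatrix_mem_matrix hone_aa
    · rw [Function.update_of_ne hkj]
      exact hw.mem_aa k fun hkM => hk ⟨hkM, hkj⟩

theorem update_mul (hw : IsMarkedWord P M p w) (j : Fin d) {ε : ZMod 2}
    {m : Matrix (Fin n) (Fin n) A} (hm : m ∈ (P.degreePart ε).matrix) :
    IsMarkedWord P (insert j M) (Function.update p j (p j + ε))
      (Function.update w j (w j * m)) where
  mem_degreePart k := by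
    rcases eq_or_ne k j with rfl | hkj
    · simpa only [Function.update_self] using mul_mem_matrix_degreePart (hw.mem_degreePart k) hm
    · simpa only [Function.update_of_ne hkj] using hw.mem_degreePart k
  degree_eq_zero k hk := by
    rw [Set.mem_insert_iff, not_or] at hk
    rw [Function.update_of_ne hk.1, hw.degree_eq_zero k hk.2]
  mem_aa k hk := by
    rw [Set.mem_insert_iff, not_or] at hk
    rw [Function.update_of_ne hk.1]
    exact hw.mem_aa k hk.2

theorem act_matTensor {D : Tower 𝕜 A β n T P} (hw : IsMarkedWord P M p w)
    {σ : Equiv.Perm (Fin d)} (hσ : σ ∈ markedStabilizer M w) :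
    D.act σ (D.matTensor d w) = D.matTensor d w := by
  have hodd : ∀ k, p k = 1 → σ k = k := fun k hk => hσ.1 k <| not_not.1 fun hkM =>
    zero_ne_one ((hw.degree_eq_zero k hkM).symm.trans hk)
  rw [Tower.act_matTensor σ hw.mem_degreePart, inversionCount_eq_zero hodd, pow_zero, one_smul,
    hσ.2]

end IsMarkedWord

/-- The positions of a word which are marked or carry a matrix different from the identity; their
number is the induction parameter in the proof of generation. -/
def nontrivialPositions (one : A) (M : Set (Fin d)) (w : Fin d → Matrix (Fin n) (Fin n) A) :
    Finset (Fin d) :=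
  {k | k ∈ M ∨ w k ≠ unitMatrix n one}

section NontrivialPositions

variable {M : Set (Fin d)} {w : Fin d → Matrix (Fin n) (Fin n) A} {j : Fin d}

theorem nontrivialPositions_update_unitMatrix :
    nontrivialPositions one (M \ {j}) (Function.update w j (unitMatrix n one)) =
      (nontrivialPositions one M w).erase j := by
  ext k
  rcases eq_or_ne k j with rfl | hkj <;> simp [nontrivialPositions, *]

theorem nontrivialPositions_insert_update_subset (hj : j ∈ nontrivialPositions one M w)
    (x : Matrix (Fin n) (Fin n) A) :
    nontrivialPositions one (insert j M) (Function.update w j x) ⊆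
      nontrivialPositions one M w := by
  intro k hk
  rcases eq_or_ne k j with rfl | hkj
  · exact hj
  · simpa [nontrivialPositions, hkj] using hk

end NontrivialPositions

namespace Tower

variable {D : Tower 𝕜 A β n T P}

theorem normMap_matTensor_mem_natMultiples_schurA [IsAddTorsionFree 𝕜]
    {w : Fin d → Matrix (Fin n) (Fin n) A} (hw : ∀ k, w k ∈ P.aa.matrix) :
    D.normMap d (D.matTensor d w) ∈
      natMultiples (Nat.card (markedStabilizer ∅ w)) (SchurA D d) := by
  have hsum : D.normMap d (D.matTensor d w) = Nat.card (markedStabilizer ∅ w) •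
      ∑ v ∈ univ.image fun σ : Equiv.Perm (Fin d) => w ∘ σ, D.matTensor d v := by
    simp only [normMap_apply, D.act_matTensor_of_mem_aa _ hw]
    exact sum_comp_eq_card_nsmul _ _ (comp_eq_comp_iff_mem_markedStabilizer w) _
  have := D.isAddTorsionFree (d := d)
  rw [hsum]
  refine nsmul_mem_natMultiples ⟨sum_mem fun v hv => ?_, fun τ => ?_⟩
  · obtain ⟨σ, -, rfl⟩ := mem_image.1 hv
    exact D.matTensor_mem_span_X fun k => hw (σ k)
  · apply nsmul_right_injective (Nat.card_pos (α := markedStabilizer ∅ w)).ne'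
    simp only [← map_nsmul, ← hsum, normMap_mem_schurS _ τ]

theorem sum_normMap_mul_insSlot (hone_aa : one ∈ P.aa) (z : T d) (m : Matrix (Fin n) (Fin n) A) :
    ∑ j, D.normMap d (z * insSlot D one j m) = D.normMap d z * D.slotSum one d m := by
  rw [← normMap_mul (D.slotSum_mem_schurS hone_aa m), slotSum_apply, mul_sum, map_sum]

theorem normMap_mul_insSlot_apply (hone_aa : one ∈ P.aa) {σ : Equiv.Perm (Fin d)} {z : T d}
    (hz : D.act σ z = z) (j : Fin d) {ε : ZMod 2} {m : Matrix (Fin n) (Fin n) A}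
    (hm : m ∈ (P.degreePart ε).matrix) :
    D.normMap d (z * insSlot D one (σ j) m) = D.normMap d (z * insSlot D one j m) := by
  rw [← normMap_act σ, D.act_mul, hz, D.act_insSlot hone_aa σ _ hm,
    ← Equiv.Perm.mul_apply, inv_mul_cancel, Equiv.Perm.one_apply]

theorem normMap_mul_insSlot_mem_iff (hone_aa : one ∈ P.aa)
    (hone : ∀ a : A, one * a = a ∧ a * one = a) {p : Fin d → ZMod 2}
    {x : Fin d → Matrix (Fin n) (Fin n) A} (hx : ∀ k, x k ∈ (P.degreePart (p k)).matrix)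
    (j : Fin d) {ε : ZMod 2} {m : Matrix (Fin n) (Fin n) A} (hm : m ∈ (P.degreePart ε).matrix)
    {Q : Submodule 𝕜 (T d)} :
    D.normMap d (D.matTensor d x * insSlot D one j m) ∈ Q ↔
      D.normMap d (D.matTensor d (Function.update x j (x j * m))) ∈ Q := by
  rw [D.matTensor_mul_insSlot hone_aa hone hx j hm, map_zsmul]
  rcases neg_one_pow_eq_or ℤ (koszulCount p (Pi.single j ε)) with h | h <;> simp [h]

/-- The summands of `N z * slotSum m` in the orbit of `j₀` are isolated by discarding the others. -/
theorem normMap_mul_insSlot_mem_natMultiples [IsAddTorsionFree 𝕜] (hone_aa : one ∈ P.aa)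
    {Q : Submodule 𝕜 (T d)} {ε : ZMod 2} {m : Matrix (Fin n) (Fin n) A}
    (hm : m ∈ (P.degreePart ε).matrix) (hQ : ∀ z ∈ Q, z * D.slotSum one d m ∈ Q)
    {H : Subgroup (Equiv.Perm (Fin d))} {z : T d} (hz : ∀ h ∈ H, D.act h z = z)
    (hzQ : D.normMap d z ∈ natMultiples (Nat.card H) Q) {j₀ : Fin d}
    (hoff : ∀ j ∉ MulAction.orbit H j₀, D.normMap d (z * insSlot D one j m) ∈
      natMultiples (Nat.card (MulAction.stabilizer H j)) Q) :
    D.normMap d (z * insSlot D one j₀ m) ∈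
      natMultiples (Nat.card (MulAction.stabilizer H j₀)) Q := by
  have hsum : ∑ j, D.normMap d (z * insSlot D one j m) ∈ natMultiples (Nat.card H) Q := by
    obtain ⟨y, hy, hyz⟩ := mem_natMultiples.1 hzQ
    rw [sum_normMap_mul_insSlot hone_aa, ← hyz, smul_mul_assoc]
    exact nsmul_mem_natMultiples (hQ y hy)
  have := D.isAddTorsionFree (d := d)
  exact mem_natMultiples_card_stabilizer_of_sum_mem (G := H) (fun _ _ _ => mem_univ _)
    (fun h j => normMap_mul_insSlot_apply hone_aa (hz h h.2) j hm) hsum (mem_univ j₀)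
    fun j _ hj => hoff j hj

theorem normMap_matTensor_mem_natMultiples [IsAddTorsionFree 𝕜] (hone_aa : one ∈ P.aa)
    (hone : ∀ a : A, one * a = a ∧ a * one = a) {Q : Submodule 𝕜 (T d)} (hA : SchurA D d ≤ Q)
    (hQ : ∀ z ∈ Q, ∀ m, z * D.slotSum one d m ∈ Q) {M : Set (Fin d)} {p : Fin d → ZMod 2}
    {w : Fin d → Matrix (Fin n) (Fin n) A} (hw : IsMarkedWord P M p w) :
    D.normMap d (D.matTensor d w) ∈ natMultiples (Nat.card (markedStabilizer M w)) Q := by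
  induction hN : #(nontrivialPositions one M w) using Nat.strong_induction_on
    generalizing M p w with | _ N ih
  rcases M.eq_empty_or_nonempty with rfl | ⟨j₀, hj₀⟩
  · exact Submodule.map_mono hA
      (normMap_matTensor_mem_natMultiples_schurA fun k => hw.mem_aa k (Set.notMem_empty k))
  set w' := Function.update w j₀ (unitMatrix n one) with hw'_def
  have hw' : IsMarkedWord P (M \ {j₀}) _ w' := hw.update_unitMatrix hone_aa j₀
  have hlt : #(nontrivialPositions one (M \ {j₀}) w') < N := by
    rw [nontrivialPositions_update_unitMatrix, ← hN]
    exact card_erase_lt_of_mem (by simp [nontrivialPositions, hj₀])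
  have hw'_mul : Function.update w' j₀ (w' j₀ * w j₀) = w := by
    rw [hw'_def, Function.update_self, unitMatrix_mul hone, Function.update_idem,
      Function.update_eq_self]
  have hmem := normMap_mul_insSlot_mem_natMultiples hone_aa (hw.mem_degreePart j₀)
    (fun z hz => hQ z hz _) (fun h hh => hw'.act_matTensor hh) (ih _ hlt hw' rfl) (j₀ := j₀)
    fun j hj => ?_
  · rw [normMap_mul_insSlot_mem_iff hone_aa hone hw'.mem_degreePart j₀ (hw.mem_degreePart j₀),
      hw'_mul] at hmem
    refine natMultiples_le_of_dvd (card_dvd_card_of_forall_exists_mem fun σ hσ => ?_) hmem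
    exact ⟨mem_markedStabilizer_diff_update hσ hj₀ _, hσ.1 j₀ hj₀⟩
  · have hj' : j ∈ nontrivialPositions one (M \ {j₀}) w' := by
      by_contra hj'
      simp only [nontrivialPositions, mem_filter, mem_univ, true_and, not_or, not_not] at hj'
      refine hj ⟨⟨_, swap_mem_markedStabilizer (fun h => h.2 rfl) hj'.1 ?_⟩,
        Equiv.swap_apply_left j₀ j⟩
      rw [hj'.2, hw'_def, Function.update_self]
    rw [normMap_mul_insSlot_mem_iff hone_aa hone hw'.mem_degreePart j (hw.mem_degreePart j₀)]
    refine natMultiples_le_of_dvd (card_dvd_card_of_forall_coe_mem fun h hh =>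
      mem_markedStabilizer_insert_update h.2 hh _)
      (ih _ ?_ (hw'.update_mul j (hw.mem_degreePart j₀)) rfl)
    exact (card_le_card (nontrivialPositions_insert_update_subset hj' _)).trans_lt hlt

end Tower

theorem matUnit_injective [Nontrivial 𝕜] (P : GoodPair 𝕜 A β) :
    Function.Injective (P.matUnit (n := n)) := by
  intro v v' h
  have hentry : (if v'.2.1 = v.2.1 ∧ v'.2.2 = v.2.2 then P.bas v'.1 else 0) = P.bas v.1 := by
    rw [← Matrix.single_apply]
    exact (congrFun₂ h v.2.1 v.2.2).symm.trans (Matrix.single_apply_same _ _ _)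
  split_ifs at hentry with hrs
  · exact Prod.ext (P.bas.injective hentry.symm) (Prod.ext hrs.1.symm hrs.2.symm)
  · exact absurd hentry.symm (P.bas.ne_zero _)

theorem isMarkedWord_matUnit (w : Fin d → Letter β n) :
    IsMarkedWord P (P.outsidePositions w) (fun k => P.degree (w k).1) fun k => P.matUnit (w k) where
  mem_degreePart _ := matUnit_mem_matrix_degreePart P _
  degree_eq_zero _ hk := if_neg fun h =>
    hk (mem_outsidePositions_of_degree_eq_one (P.degree_eq_one_iff.2 h))
  mem_aa _ hk := matUnit_mem_matrix_aa hk

theorem markedStabilizer_matUnit [Nontrivial 𝕜] (M : Set (Fin d)) (w : Fin d → Letter β n) :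
    markedStabilizer M (fun k => P.matUnit (w k)) = markedStabilizer M w := by
  ext σ
  exact and_congr_right fun _ => (matUnit_injective P).comp_left.eq_iff (a := w ∘ σ) (b := w)

namespace Tower

variable {D : Tower 𝕜 A β n T P}

theorem schurT_le_of_mul_slotSum_mem [Nontrivial 𝕜] [IsAddTorsionFree 𝕜]
    (ord : LinearOrder (A × Fin n × Fin n)) (hone_aa : one ∈ P.aa)
    (hone : ∀ a : A, one * a = a ∧ a * one = a) {Q : Submodule 𝕜 (T d)} (hA : SchurA D d ≤ Q)
    (hQ : ∀ z ∈ Q, ∀ m, z * D.slotSum one d m ∈ Q) : SchurT D ord d ≤ Q := by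
  refine Submodule.span_le.2 ?_
  rintro _ ⟨b, r, s, hw, rfl⟩
  let w : Fin d → Letter β n := fun k => (b k, r k, s k)
  have hmem := normMap_matTensor_mem_natMultiples hone_aa hone hA hQ (isMarkedWord_matUnit w)
  have := D.isAddTorsionFree (d := d)
  rwa [markedStabilizer_matUnit, ← wordBasis_apply, normMap_wordBasis ord (w := w) hw,
    nsmul_mem_natMultiples_iff Nat.card_pos.ne'] at hmem

theorem slotSum_mem_adjoin [SMulCommClass 𝕜 (T d) (T d)] [IsScalarTower 𝕜 (T d) (T d)]
    (hone_aa : one ∈ P.aa) {Y : Set (Matrix (Fin n) (Fin n) A)}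
    (hY : ∀ i r s, P.part i ≠ 0 → Matrix.single r s (P.bas i) ∈ Y) (m : Matrix (Fin n) (Fin n) A) :
    D.slotSum one d m ∈ NonUnitalAlgebra.adjoin 𝕜 (SchurA D d ∪ D.slotSum one d '' Y) := by
  set R := NonUnitalAlgebra.adjoin 𝕜 (SchurA D d ∪ D.slotSum one d '' Y : Set (T d))
  have hle : Submodule.span 𝕜 (Set.range P.matUnit) ≤ R.toSubmodule.comap (D.slotSum one d) := by
    refine Submodule.span_le.2 ?_
    rintro _ ⟨v, rfl⟩
    by_cases hv : P.part v.1 = 0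
    · exact NonUnitalAlgebra.subset_adjoin 𝕜 (Or.inl
        (D.slotSum_mem_schurA hone_aa (single_mem_matrix (P.bas_mem_aa _ hv) _ _)))
    · exact NonUnitalAlgebra.subset_adjoin 𝕜 (Or.inr ⟨_, hY v.1 v.2.1 v.2.2 hv, rfl⟩)
  exact hle (span_range_matUnit P ▸ Submodule.mem_top)

theorem schurT_subset_adjoin [SMulCommClass 𝕜 (T d) (T d)] [IsScalarTower 𝕜 (T d) (T d)]
    [Nontrivial 𝕜] [IsAddTorsionFree 𝕜] (ord : LinearOrder (A × Fin n × Fin n))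
    (hone_aa : one ∈ P.aa) (hone : ∀ a : A, one * a = a ∧ a * one = a)
    {Y : Set (Matrix (Fin n) (Fin n) A)}
    (hY : ∀ i r s, P.part i ≠ 0 → Matrix.single r s (P.bas i) ∈ Y) :
    (SchurT D ord d : Set (T d)) ⊆
      NonUnitalAlgebra.adjoin 𝕜 (SchurA D d ∪ D.slotSum one d '' Y) :=
  schurT_le_of_mul_slotSum_mem (Q := (NonUnitalAlgebra.adjoin 𝕜 _).toSubmodule) ord hone_aa hone
    (fun _ hx => NonUnitalAlgebra.subset_adjoin 𝕜 (Or.inl hx))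
    fun _ hz m => mul_mem (S := NonUnitalSubalgebra 𝕜 (T d)) hz (slotSum_mem_adjoin hone_aa hY m)

end Tower

end Generation

theorem statement11_general {𝕜 A β : Type} [CommRing 𝕜] [Nontrivial 𝕜] [IsAddTorsionFree 𝕜]
    [NonUnitalRing A] [Module 𝕜 A] {n : ℕ} {T : ℕ → Type} [∀ e, NonUnitalRing (T e)]
    [∀ e, Module 𝕜 (T e)] (P : GoodPair 𝕜 A β) (D : Tower 𝕜 A β n T P)
    (ord : LinearOrder (A × Fin n × Fin n)) (d : ℕ) [SMulCommClass 𝕜 (T d) (T d)]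
    [IsScalarTower 𝕜 (T d) (T d)] (one : A) (hone_aa : one ∈ P.aa)
    (hone : ∀ a : A, one * a = a ∧ a * one = a) (Y : Set (Matrix (Fin n) (Fin n) A))
    (hY : ∀ i r s, P.part i ≠ 0 → Matrix.single r s (P.bas i) ∈ Y) :
    (NonUnitalAlgebra.adjoin 𝕜 ((SchurA D d : Set (T d)) ∪
        {x | ∃ m ∈ Y, x = ∑ j : Fin d, insSlot D one j m}) : Set (T d))
      = (SchurT D ord d : Set (T d)) := by
  have hset : {x | ∃ m ∈ Y, x = ∑ j : Fin d, insSlot D one j m} = D.slotSum one d '' Y := by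
    ext x
    exact exists_congr fun m => and_congr_right fun _ => by rw [D.slotSum_apply, eq_comm]
  rw [hset]
  refine Set.Subset.antisymm
    (Set.Subset.trans ?_ (D.adjoin_schurA_slotSum_subset_schurT ord hone_aa hone))
    (Tower.schurT_subset_adjoin ord hone_aa hone hY)
  exact NonUnitalAlgebra.adjoin_mono (Set.union_subset_union_right _ (Set.image_subset_range _ _))

/-- Suppose `(A,𝔞)` is a unital good pair.  Then `T^A_𝔞(n,d)` is generated
as a `𝕜`-algebra by `S^𝔞(n,d)` together with the elements
`1^{⊗(d−1)} * y = Σ_{e=0}^{d−1} 1^{⊗(d−1−e)} ⊗ y ⊗ 1^{⊗e}`, `y ∈ Y`; consequently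
`T^A_𝔞(n,d)` is the subalgebra of `S^A(n,d)` generated by `S^𝔞(n,d)` and the elements
`Σ_{e=0}^{d−1} 1^{⊗(d−1−e)} ⊗ ξ ⊗ 1^{⊗e}`, `ξ ∈ M_n(A)`. -/
theorem statement11 {𝕜 A β : Type} [CommRing 𝕜] [IsDomain 𝕜] [CharZero 𝕜]
    [NonUnitalRing A] [Module 𝕜 A] [SMulCommClass 𝕜 A A] [IsScalarTower 𝕜 A A]
    {n : ℕ} (hn : 0 < n) {T : ℕ → Type} [∀ e, NonUnitalRing (T e)] [∀ e, Module 𝕜 (T e)]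
    [∀ e, SMulCommClass 𝕜 (T e) (T e)] [∀ e, IsScalarTower 𝕜 (T e) (T e)]
    (P : GoodPair 𝕜 A β) (D : Tower 𝕜 A β n T P) (ord : LinearOrder (A × Fin n × Fin n))
    (d : ℕ) (one : A) (hone_aa : one ∈ P.aa) (hone : ∀ a : A, one * a = a ∧ a * one = a) :
    ((NonUnitalAlgebra.adjoin 𝕜 ((SchurA D d : Set (T d)) ∪
        {x | ∃ m ∈ Ymat P, x = ∑ j : Fin d, insSlot D one j m}) : Set (T d))
      = (SchurT D ord d : Set (T d))) ∧
    ((NonUnitalAlgebra.adjoin 𝕜 ((SchurA D d : Set (T d)) ∪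
        {x | ∃ m : Matrix (Fin n) (Fin n) A, x = ∑ j : Fin d, insSlot D one j m}) : Set (T d))
      = (SchurT D ord d : Set (T d))) := by
  refine ⟨statement11_general P D ord d one hone_aa hone (Ymat (n := n) P)
    fun i r s hi => Submodule.subset_span ⟨i, r, s, hi, rfl⟩, ?_⟩
  simpa only [Set.mem_univ, true_and] using
    statement11_general P D ord d one hone_aa hone Set.univ fun _ _ _ _ => Set.mem_univ _

end GS
end
end

section
/- Let e ∈ S be an idempotent. Then e is a double centralizer idempotent for S if and only if e is a double centralizer idempotent for S_𝕂 := S ⊗_𝕜 𝕂 and e is sound for S. -/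
open Finset

open scoped Classical TensorProduct

noncomputable section

namespace GS

variable {𝕜 A β : Type} [CommRing 𝕜] [NonUnitalRing A] [Module 𝕜 A]

variable {n : ℕ} {T : ℕ → Type} [∀ e, NonUnitalRing (T e)] [∀ e, Module 𝕜 (T e)]

/-- The map `λ_s`, left multiplication by `s` on `S·e = {x | x·e = x}`, an element of
`End_{eSe}(Se)`. -/
def lmulSe (𝕜 : Type) {S : Type} [CommRing 𝕜] [Ring S] [Algebra 𝕜 S] (e s : S) :
    ↥((⊤ : Submodule 𝕜 S) ⊓ rfix 𝕜 e) →ₗ[𝕜] ↥((⊤ : Submodule 𝕜 S) ⊓ rfix 𝕜 e) where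
  toFun x := ⟨s * (x : S), by
    refine Submodule.mem_inf.mpr ⟨Submodule.mem_top, ?_⟩
    have hx : (x : S) * e = (x : S) := (Submodule.mem_inf.mp x.2).2
    show s * (x : S) * e = s * (x : S)
    rw [mul_assoc, hx]⟩
  map_add' x y := by
    apply Subtype.ext
    simp [mul_add]
  map_smul' c x := by
    apply Subtype.ext
    simp [mul_smul_comm]

/-! The map `λ : S → End_{eSe}(Se)` is `𝕜`-linear, and since `Se` is finitely presented, forming
endomorphisms commutes with localization: `λ_𝕂` is the localization of `λ` at `𝕜 ∖ {0}`. Hence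
`λ_𝕂` is bijective when `λ` is. Conversely, if `λ_𝕂` is bijective, then `λ` is injective with
torsion cokernel. Given `f` with `d f = λ_s` and `d ≠ 0`, write `s = m t` with `t` indivisible and
cancel `gcd(d, m)`, so that `d' f = m' λ_t` with `a d' + b m' = 1`. Then
`λ_t = d' (a λ_t + b f)`, so soundness makes `d'` a unit and `f` lies in the image of `λ`. -/

section Indivisible

variable (k : Type*) {M N : Type*} [CommRing k] [AddCommMonoid M] [Module k M]
  [AddCommMonoid N] [Module k N]

/-- `v` is *indivisible* if only units divide it. For `k = ℤ` these are the primitive vectors. -/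
def Indivisible (v : M) : Prop :=
  ∀ (m : k) (w : M), v = m • w → IsUnit m

variable {k}

theorem Indivisible.of_map {v : M} (φ : M →ₗ[k] N) (h : Indivisible k (φ v)) :
    Indivisible k v :=
  fun m w hv ↦ h m (φ w) (by rw [hv, map_smul])

theorem Indivisible.map_linearEquiv {v : M} (h : Indivisible k v) (φ : M ≃ₗ[k] N) :
    Indivisible k (φ v) :=
  .of_map φ.symm.toLinearMap (by simpa using h)

theorem indivisible_one : Indivisible k (1 : k) :=
  fun _ w h ↦ .of_mul_eq_one w h.symm

variable (k) in
theorem exists_eq_smul_indivisible [IsDomain k] [IsBezout k] [Module.Free k M] [Module.Finite k M]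
    {v : M} (hv : v ≠ 0) : ∃ (m : k) (w : M), v = m • w ∧ Indivisible k w := by
  let values := LinearMap.range (Module.Dual.eval k M v)
  -- A generator of the ideal of values of functionals at `v` is the content of `v`.
  obtain ⟨m, hm⟩ : values.IsPrincipal :=
    IsBezout.isPrincipal_of_FG _ (Module.Finite.iff_fg.mp inferInstance)
  have dvd_apply (φ : Module.Dual k M) : m ∣ φ v := by
    rw [← Ideal.mem_span_singleton, ← Ideal.submodule_span_eq, ← hm]
    exact ⟨φ, rfl⟩
  obtain ⟨φ, hφ⟩ : m ∈ values := hm ▸ Submodule.mem_span_singleton_self m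
  let b := Module.Free.chooseBasis k M
  choose c hc using fun i ↦ dvd_apply (b.coord i)
  let w := b.equivFun.symm c
  have hvw : v = m • w := b.equivFun.injective <| by
    rw [map_smul, LinearEquiv.apply_symm_apply]
    exact funext hc
  have hm0 : m ≠ 0 := by
    rintro rfl
    exact hv (by rw [hvw, zero_smul])
  have hφw : φ w = 1 := mul_left_cancel₀ hm0 <| by
    rw [← smul_eq_mul, ← map_smul, ← hvw, mul_one]
    exact hφ
  exact ⟨m, w, hvw, .of_map φ (hφw ▸ indivisible_one)⟩

theorem surjective_of_indivisible [IsDomain k] [IsBezout k] [Module.Free k M] [Module.Finite k M]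
    [Module.IsTorsionFree k N] (φ : M →ₗ[k] N)
    (hφ : ∀ v, Indivisible k v → Indivisible k (φ v))
    (htors : ∀ y, ∃ d : k, d ≠ 0 ∧ d • y ∈ LinearMap.range φ) :
    Function.Surjective φ := by
  intro y
  rcases eq_or_ne y 0 with rfl | hy
  · exact ⟨0, map_zero φ⟩
  obtain ⟨d, hd, v, hv⟩ := htors y
  have hv0 : v ≠ 0 := by
    rintro rfl
    exact smul_ne_zero hd hy (by rw [← hv, map_zero])
  obtain ⟨m, w, rfl, hw⟩ := exists_eq_smul_indivisible k hv0
  obtain ⟨a, b, hab⟩ := IsBezout.gcd_eq_sum d m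
  set g := IsBezout.gcd d m
  obtain ⟨d', hd'⟩ : g ∣ d := IsBezout.gcd_dvd_left d m
  obtain ⟨m', hm'⟩ : g ∣ m := IsBezout.gcd_dvd_right d m
  have hg : g ≠ 0 := by
    intro hg
    exact hd (by rw [hd', hg, zero_mul])
  have coprime : a * d' + b * m' = 1 := mul_left_cancel₀ hg <| by
    linear_combination hab - a * hd' - b * hm'
  have cancelled : d' • y = m' • φ w := smul_right_injective N hg <| by
    simp only [smul_smul, ← hd', ← hm', ← hv, map_smul]
  have hφw : φ w = d' • (a • φ w + b • y) := by
    rw [smul_add, smul_comm d' b y, cancelled, smul_smul, smul_smul, ← add_smul, mul_comm d' a,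
      coprime, one_smul]
  obtain ⟨u, rfl⟩ := hφ w hw d' _ hφw
  refine ⟨u⁻¹.1 • m' • w, ?_⟩
  rw [map_smul, map_smul, ← cancelled, smul_smul, Units.inv_mul, one_smul]

end Indivisible

section LocalizedSquare

variable {k : Type*} [CommRing k] (W : Submonoid k) {M M' N N' : Type*}
  [AddCommMonoid M] [Module k M] [AddCommMonoid M'] [Module k M']
  [AddCommMonoid N] [Module k N] [AddCommMonoid N'] [Module k N']
  (f : M →ₗ[k] M') (g : N →ₗ[k] N') {φ : M →ₗ[k] N} {φ' : M' →ₗ[k] N'}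

theorem bijective_of_localized_square [IsLocalizedModule W f] [IsLocalizedModule W g]
    (square : φ' ∘ₗ f = g ∘ₗ φ) (hφ : Function.Bijective φ) : Function.Bijective φ' := by
  obtain rfl : φ' = IsLocalizedModule.map W f g φ :=
    IsLocalizedModule.linearMap_ext W f g (by rw [square, IsLocalizedModule.map_comp])
  exact ⟨IsLocalizedModule.map_injective W f g φ hφ.1,
    IsLocalizedModule.map_surjective W f g φ hφ.2⟩

theorem exists_smul_mem_range_of_localized_square [IsLocalizedModule W f] [IsLocalizedModule W g]
    (square : φ' ∘ₗ f = g ∘ₗ φ) (hφ' : Function.Surjective φ') (y : N) :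
    ∃ w ∈ W, w • y ∈ LinearMap.range φ := by
  obtain ⟨x', hx'⟩ := hφ' (g y)
  obtain ⟨⟨x, w⟩, hx⟩ := IsLocalizedModule.surj W f x'
  have hgx : g (w • y) = g (φ x) :=
    calc g (w • y) = φ' (w • x') := by
          rw [Submonoid.smul_def, Submonoid.smul_def, map_smul, map_smul, hx']
      _ = g (φ x) := by rw [hx]; exact LinearMap.congr_fun square x
  obtain ⟨v, hv⟩ := (IsLocalizedModule.eq_iff_exists W g).mp hgx
  refine ⟨v * w, (v * w).2, v • x, ?_⟩
  rw [Submonoid.smul_def, map_smul, mul_smul]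
  exact hv.symm

end LocalizedSquare

theorem injective_of_isTorsionFree_of_isLocalizedModule {k M M' : Type*} [CommRing k] [IsDomain k]
    [AddCommMonoid M] [Module k M] [Module.IsTorsionFree k M] [AddCommMonoid M'] [Module k M']
    (f : M →ₗ[k] M') [IsLocalizedModule (nonZeroDivisors k) f] : Function.Injective f :=
  (IsLocalizedModule.injective_iff_isRegular (nonZeroDivisors k) f).mpr fun c ↦
    smul_right_injective M (nonZeroDivisors.ne_zero c.2)

theorem bijective_iff_localized_bijective_and_indivisible {k : Type*} [CommRing k] [IsDomain k]
    [IsBezout k] {M M' N N' : Type*} [AddCommMonoid M] [Module k M] [Module.Free k M]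
    [Module.Finite k M] [AddCommMonoid M'] [Module k M'] [AddCommMonoid N] [Module k N]
    [Module.IsTorsionFree k N] [AddCommMonoid N'] [Module k N']
    (f : M →ₗ[k] M') [IsLocalizedModule (nonZeroDivisors k) f]
    (g : N →ₗ[k] N') [IsLocalizedModule (nonZeroDivisors k) g]
    {φ : M →ₗ[k] N} {φ' : M' →ₗ[k] N'} (square : φ' ∘ₗ f = g ∘ₗ φ) :
    Function.Bijective φ ↔
      Function.Bijective φ' ∧ ∀ v, Indivisible k v → Indivisible k (φ v) := by
  constructor
  · intro hφ
    exact ⟨bijective_of_localized_square (nonZeroDivisors k) f g square hφ,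
      fun v hv ↦ hv.map_linearEquiv (.ofBijective φ hφ)⟩
  · rintro ⟨hφ', hind⟩
    have hgφ : Function.Injective (g ∘ φ) := by
      rw [← LinearMap.coe_comp, ← square]
      exact hφ'.1.comp (injective_of_isTorsionFree_of_isLocalizedModule f)
    refine ⟨hgφ.of_comp, surjective_of_indivisible φ hind fun y ↦ ?_⟩
    obtain ⟨d, hd, hy⟩ :=
      exists_smul_mem_range_of_localized_square (nonZeroDivisors k) f g square hφ'.2 y
    exact ⟨d, nonZeroDivisors.ne_zero hd, hy⟩

section LocalizedSubmodule

variable {k : Type*} [CommRing k] (W : Submonoid k) (K : Type*) [CommRing K] [Algebra k K]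
  [IsLocalization W K] {M M' : Type*} [AddCommMonoid M] [Module k M] [AddCommMonoid M']
  [Module k M'] [Module K M'] [IsScalarTower k K M']

theorem isLocalizedModule_restrict (f : M →ₗ[k] M') [IsLocalizedModule W f] {N : Submodule k M}
    {N' : Submodule K M'} (g : N →ₗ[k] N') (hg : ∀ x, (g x : M') = f x)
    (hN : ∀ x, f x ∈ N' → x ∈ N) : IsLocalizedModule W g where
  map_units w := by
    rw [← (Algebra.lsmul k (A := K) k N').commutes]
    exact (IsLocalization.map_units K w).map _
  surj y := by
    obtain ⟨⟨x, w⟩, hx⟩ := IsLocalizedModule.surj W f y.1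
    have hxN : x ∈ N := hN x (by rw [← hx]; exact (w.1 • y).2)
    exact ⟨⟨⟨x, hxN⟩, w⟩, Subtype.ext (by rw [hg]; exact hx)⟩
  exists_of_eq {x y} h := by
    obtain ⟨w, hw⟩ := IsLocalizedModule.exists_of_eq (S := W) (f := f) (x₁ := x.1) (x₂ := y.1)
      (by rw [← hg, ← hg, h])
    exact ⟨w, Subtype.ext hw⟩

end LocalizedSubmodule

section DoubleCentralizer

variable (k : Type) [CommRing k] {S : Type} [Ring S] [Algebra k S] (e : S)

/-- The left ideal `Se` of an idempotent `e`, encoded as `{x | x * e = x}` in the shape used by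
`IsDCI`. -/
abbrev leftIdeal : Submodule k S := ⊤ ⊓ rfix k e

variable {k e} in
theorem mem_leftIdeal {x : S} : x ∈ leftIdeal k e ↔ x * e = x :=
  ⟨fun h ↦ h.2, fun h ↦ ⟨Submodule.mem_top, h⟩⟩

/-- The `k`-module `End_{eSe}(Se)`. -/
def cornerEnd : Submodule k (leftIdeal k e →ₗ[k] leftIdeal k e) where
  carrier := {f | IsEquivar k ⊤ e f}
  add_mem' hf hg x c hc hec h := by
    simp only [LinearMap.add_apply, Submodule.coe_add, hf x c hc hec h, hg x c hc hec h, add_mul]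
  zero_mem' x c _ _ _ := by simp only [LinearMap.zero_apply, ZeroMemClass.coe_zero, zero_mul]
  smul_mem' a f hf x c hc hec h := by
    simp only [LinearMap.smul_apply, Submodule.coe_smul, hf x c hc hec h, smul_mul_assoc]

/-- The map `λ : S → End_{eSe}(Se)` given by left multiplication. -/
def leftMul : S →ₗ[k] cornerEnd k e where
  toFun s := ⟨lmulSe k e s, fun x c _ _ _ ↦ (mul_assoc s x c).symm⟩
  map_add' s t := Subtype.ext <| LinearMap.ext fun x ↦ Subtype.ext (add_mul s t x.1)
  map_smul' a s := Subtype.ext <| LinearMap.ext fun x ↦ Subtype.ext (smul_mul_assoc a s x.1)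

variable {k e} in
theorem leftMul_eq_iff {s : S} {f : cornerEnd k e} :
    leftMul k e s = f ↔ ∀ x, s * x.1 = (f.1 x).1 := by
  simp only [Subtype.ext_iff, LinearMap.ext_iff]
  rfl

theorem isDCI_top_iff : IsDCI k ⊤ e ↔ Function.Bijective (leftMul k e) := by
  refine and_congr ⟨fun h s t hst ↦ ?_, fun h s _ t _ hst ↦ ?_⟩
    ⟨fun h f ↦ ?_, fun h f hf ↦ ?_⟩
  · exact h s trivial t trivial fun x hx ↦ leftMul_eq_iff.mp hst ⟨x, hx⟩
  · exact h (leftMul_eq_iff.mpr fun x ↦ hst x x.2)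
  · obtain ⟨s, -, hs⟩ := h f.1 f.2
    exact ⟨s, leftMul_eq_iff.mpr fun x ↦ (hs x).symm⟩
  · obtain ⟨s, hs⟩ := h ⟨f, hf⟩
    exact ⟨s, trivial, fun x ↦ (leftMul_eq_iff.mp hs x).symm⟩

theorem indivisible_leftMul_iff (s : S) : Indivisible k (leftMul k e s) ↔
    ∀ (m : k) (g : leftIdeal k e →ₗ[k] leftIdeal k e),
      IsEquivar k ⊤ e g → lmulSe k e s = m • g → IsUnit m :=
  ⟨fun h m g hg hs ↦ h m ⟨g, hg⟩ (Subtype.ext hs),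
    fun h m g hs ↦ h m g.1 g.2 (congrArg Subtype.val hs)⟩

variable {e} in
theorem finitePresentation_leftIdeal [Module.FinitePresentation k S] (he : e * e = e) :
    Module.FinitePresentation k (leftIdeal k e) := by
  let π : S →ₗ[k] leftIdeal k (1 - e) := (LinearMap.mulRight k (1 - e)).codRestrict _ fun x ↦
    mem_leftIdeal.mpr (by simp [mul_assoc, (IsIdempotentElem.one_sub he).eq])
  refine Module.finitePresentation_of_split_exact (leftIdeal k e).subtype π
    (leftIdeal k (1 - e)).subtype (LinearMap.ext fun x ↦ Subtype.ext (mem_leftIdeal.mp x.2))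
    (Submodule.subtype_injective _) (LinearMap.exact_iff.mpr <| Submodule.ext fun x ↦ ?_)
  rw [Submodule.range_subtype, mem_leftIdeal, LinearMap.mem_ker, Subtype.ext_iff]
  change x * (1 - e) = 0 ↔ _
  rw [mul_sub, mul_one, sub_eq_zero, eq_comm]

end DoubleCentralizer

section Localization

variable {k : Type} [CommRing k] (W : Submonoid k) (K : Type) [CommRing K] [Algebra k K]
  {S SK : Type} [Ring S] [Algebra k S] [Ring SK] [Algebra k SK] [Algebra K SK]
  [IsScalarTower k K SK] (j : S →ₐ[k] SK) (e : S)

/-- The map `Se → SK (j e)` induced by an algebra map `j : S → SK`. -/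
def leftIdealMap : leftIdeal k e →ₗ[k] leftIdeal K (j e) where
  toFun x := ⟨j x, mem_leftIdeal.mpr (by rw [← map_mul, mem_leftIdeal.mp x.2])⟩
  map_add' x y := Subtype.ext (map_add j x.1 y.1)
  map_smul' a x := Subtype.ext (map_smul j a x.1)

variable [IsLocalization W K]

variable {j} in
theorem isLocalizedModule_leftIdealMap [IsLocalizedModule W j.toLinearMap]
    (hj : Function.Injective j) : IsLocalizedModule W (leftIdealMap K j e) :=
  isLocalizedModule_restrict W K j.toLinearMap _ (fun _ ↦ rfl) fun x hx ↦
    mem_leftIdeal.mpr <| hj <| by rw [map_mul]; exact mem_leftIdeal.mp hx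

variable [IsLocalizedModule W (leftIdealMap K j e)]

variable {e} in
theorem coe_mapExtendScalars_leftIdealMap (f : leftIdeal k e →ₗ[k] leftIdeal k e)
    (x : leftIdeal k e) :
    (IsLocalizedModule.mapExtendScalars W (leftIdealMap K j e) (leftIdealMap K j e) K f
      (leftIdealMap K j e x) : SK) = j (f x) := by
  rw [IsLocalizedModule.mapExtendScalars_apply_apply, IsLocalizedModule.map_apply]
  rfl

variable {j e} [IsLocalizedModule W j.toLinearMap]

theorem isEquivar_mapExtendScalars_iff (hj : Function.Injective j)
    (f : leftIdeal k e →ₗ[k] leftIdeal k e) :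
    IsEquivar K ⊤ (j e) (IsLocalizedModule.mapExtendScalars W (leftIdealMap K j e)
      (leftIdealMap K j e) K f) ↔ IsEquivar k ⊤ e f := by
  set ι := leftIdealMap K j e
  set F := IsLocalizedModule.mapExtendScalars W ι ι K f
  have hFι (x) : (F (ι x) : SK) = j (f x) := coe_mapExtendScalars_leftIdealMap W K j f x
  have hF_smul (u : W) (y) : (F (u • y) : SK) = u • (F y : SK) :=
    congrArg Subtype.val (F.map_smul_of_tower u.1 y)
  constructor
  · intro hF x c _ hc hxc
    have hιxc : (ι ⟨x * c, hxc⟩ : SK) = ι x * j c := map_mul j x.1 c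
    apply hj
    rw [← hFι, map_mul, ← hFι,
      ← hF (ι x) (j c) trivial (by rw [← map_mul, ← map_mul, hc]) (hιxc ▸ (ι _).2)]
    exact congrArg (fun y ↦ (F y).1) (Subtype.ext hιxc)
  · intro hf x' c' _ hc' hxc'
    obtain ⟨⟨x, v⟩, hx⟩ := IsLocalizedModule.surj W ι x'
    obtain ⟨⟨c, w⟩, hc : w • c' = j c⟩ := IsLocalizedModule.surj W j.toLinearMap c'
    have hjx : v • x'.1 = j x := congrArg Subtype.val hx
    have hjxc : j (x * c) = (v * w) • (x'.1 * c') := by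
      rw [map_mul, ← hjx, ← hc, smul_mul_smul_comm]
    have hec : e * c * e = c := hj <| by
      rw [map_mul, map_mul, ← hc, mul_smul_comm, smul_mul_assoc, hc']
    have hxc : x * c ∈ leftIdeal k e := mem_leftIdeal.mpr <| hj <| by
      rw [map_mul, hjxc, smul_mul_assoc, mem_leftIdeal.mp hxc']
    apply IsLocalizedModule.smul_injective j.toLinearMap (v * w)
    calc (v * w) • (F ⟨x' * c', hxc'⟩ : SK) = F ((v * w) • ⟨x' * c', hxc'⟩) := (hF_smul ..).symm
      _ = F (ι ⟨x * c, hxc⟩) := congrArg (fun y ↦ (F y).1) (Subtype.ext hjxc.symm)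
      _ = F (ι x) * j c := by rw [hFι, hf x c trivial hec hxc, map_mul, hFι]
      _ = (v • (F x' : SK)) * (w • c') := by rw [← hF_smul, hx, hc]
      _ = (v * w) • ((F x' : SK) * c') := smul_mul_smul_comm ..

/-- The map `End_{eSe}(Se) → End_{j(e) SK j(e)}(SK j(e))` extending endomorphisms `K`-linearly. -/
def cornerEndMap (hj : Function.Injective j) : cornerEnd k e →ₗ[k] cornerEnd K (j e) where
  toFun f := ⟨IsLocalizedModule.mapExtendScalars W (leftIdealMap K j e) (leftIdealMap K j e) K f.1,
    (isEquivar_mapExtendScalars_iff W K hj f.1).mpr f.2⟩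
  map_add' f g := Subtype.ext (map_add _ f.1 g.1)
  map_smul' a f := Subtype.ext (map_smul _ a f.1)

theorem isLocalizedModule_cornerEndMap [Module.FinitePresentation k (leftIdeal k e)]
    (hj : Function.Injective j) :
    IsLocalizedModule W (cornerEndMap (e := e) W K hj) :=
  isLocalizedModule_restrict W K (IsLocalizedModule.mapExtendScalars W (leftIdealMap K j e)
    (leftIdealMap K j e) K) _ (fun _ ↦ rfl) fun f ↦ (isEquivar_mapExtendScalars_iff W K hj f).mp

theorem leftMul_comp_eq_cornerEndMap_comp (hj : Function.Injective j) :
    (leftMul K (j e)).restrictScalars k ∘ₗ j.toLinearMap =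
      cornerEndMap W K hj ∘ₗ leftMul k e := by
  ext s : 1
  have agree := IsLocalizedModule.linearMap_ext W (leftIdealMap K j e) (leftIdealMap K j e)
    (g := (lmulSe K (j e) (j s)).restrictScalars k)
    (g' := (cornerEndMap W K hj (leftMul k e s)).1.restrictScalars k) <|
    LinearMap.ext fun x ↦ Subtype.ext <| (map_mul j s x.1).symm.trans
      (coe_mapExtendScalars_leftIdealMap W K j (lmulSe k e s) x).symm
  exact leftMul_eq_iff.mpr fun x' ↦ congrArg Subtype.val (LinearMap.congr_fun agree x')

end Localization

theorem isDCI_iff_localized_isDCI_and_indivisible {k K S SK : Type} [CommRing k] [IsDomain k]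
    [IsBezout k] [CommRing K] [Algebra k K] [IsFractionRing k K] [Ring S] [Algebra k S]
    [Module.Free k S] [Module.Finite k S] [Ring SK] [Algebra k SK] [Algebra K SK]
    [IsScalarTower k K SK] (j : S →ₐ[k] SK) [IsLocalizedModule (nonZeroDivisors k) j.toLinearMap]
    {e : S} (he : e * e = e) :
    IsDCI k ⊤ e ↔ IsDCI K ⊤ (j e) ∧ ∀ s, Indivisible k s → Indivisible k (leftMul k e s) := by
  have hj : Function.Injective j := injective_of_isTorsionFree_of_isLocalizedModule j.toLinearMap
  have := Module.finitePresentation_of_projective k S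
  have := finitePresentation_leftIdeal k he
  have := isLocalizedModule_leftIdealMap (nonZeroDivisors k) K e hj
  have := isLocalizedModule_cornerEndMap (e := e) (nonZeroDivisors k) K hj
  rw [isDCI_top_iff, isDCI_top_iff]
  exact bijective_iff_localized_bijective_and_indivisible j.toLinearMap _
    (leftMul_comp_eq_cornerEndMap_comp (nonZeroDivisors k) K hj)

theorem statement15_general {𝕜 𝕂 S : Type} [CommRing 𝕜] [IsDomain 𝕜] [IsBezout 𝕜] [CommRing 𝕂]
    [Algebra 𝕜 𝕂] [IsFractionRing 𝕜 𝕂] [Ring S] [Algebra 𝕜 S] [Module.Free 𝕜 S]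
    [Module.Finite 𝕜 S] {e : S} (he : e * e = e) :
    IsDCI 𝕜 (⊤ : Submodule 𝕜 S) e ↔
      IsDCI 𝕂 (⊤ : Submodule 𝕂 (𝕂 ⊗[𝕜] S)) (1 ⊗ₜ[𝕜] e) ∧
        ∀ s : S, Indivisible 𝕜 s → Indivisible 𝕜 (leftMul 𝕜 e s) := by
  let j : S →ₐ[𝕜] 𝕂 ⊗[𝕜] S := Algebra.TensorProduct.includeRight
  have : IsLocalizedModule (nonZeroDivisors 𝕜) j.toLinearMap :=
    IsLocalization.tensorProduct_isLocalizedModule (nonZeroDivisors 𝕜) 𝕂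
  exact isDCI_iff_localized_isDCI_and_indivisible j he

/-- Let `𝕜` be a PID of characteristic `0` with fraction field `𝕂`, `S` a
`𝕜`-algebra free of finite rank as a `𝕜`-module and `e ∈ S` an idempotent.  Then `e` is a
double centralizer idempotent for `S` if and only if `e` is a double centralizer idempotent
for `S_𝕂 = 𝕂 ⊗ S` and `e` is sound for `S` (i.e. `λ` sends indivisible elements of `S` to
indivisible elements of `End_{eSe}(Se)`). -/
theorem statement15 {𝕜 : Type} [CommRing 𝕜] [IsDomain 𝕜] [IsPrincipalIdealRing 𝕜]
    [CharZero 𝕜] {S : Type} [Ring S] [Algebra 𝕜 S] [Module.Free 𝕜 S] [Module.Finite 𝕜 S]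
    (e : S) (he : e * e = e) :
    IsDCI 𝕜 (⊤ : Submodule 𝕜 S) e ↔
      (IsDCI (FractionRing 𝕜) (⊤ : Submodule (FractionRing 𝕜) (FractionRing 𝕜 ⊗[𝕜] S))
          ((1 : FractionRing 𝕜) ⊗ₜ[𝕜] e) ∧
        ∀ s : S, (∀ (m : 𝕜) (w : S), s = m • w → IsUnit m) →
          ∀ (m : 𝕜) (g : ↥((⊤ : Submodule 𝕜 S) ⊓ rfix 𝕜 e) →ₗ[𝕜]
              ↥((⊤ : Submodule 𝕜 S) ⊓ rfix 𝕜 e)),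
            IsEquivar 𝕜 (⊤ : Submodule 𝕜 S) e g → lmulSe 𝕜 e s = m • g → IsUnit m) := by
  simp only [← indivisible_leftMul_iff]
  exact statement15_general he

end GS
end
end
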